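/- For every natural number n ≥ 1 and every nondegenerate continuum W, if there exists a nondegenerate continuum Ŵ with covering dimension dim Ŵ = 1 such that every nondegenerate subcontinuum of Ŵ admits a continuous surjection onto W, then there exists a hereditarily indecomposable n-dimensional Cantor manifold X such that every nondegenerate subcontinuum of X admits a continuous surjection onto W. -/

import Mathlib

/-!
Let `Y` be a nondegenerate continuum of dimension one all of whose nondegenerate subcontinua map
onto `W`, and let `a ≠ b` be points of `Y`. The manifold `X` is found inside the power
`Y ^ (n + 1)`. A nondegenerate subcontinuum of the power has a nondegenerate projection to some
factor, and this projection maps onto `W`; hence any `n`-dimensional hereditarily indecomposable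
Cantor manifold in the power will do. The faces `x i = a` and `x i = b` play the role of the
opposite faces of a cube.

* Upper bound. The power has dimension at most `n + 1` (`hasCov_pi`, by Ostrand's coloured covers).
  Hence its disjoint closed sets can be separated by a partition of dimension at most `n`: the sets
  on the two sides of the partition are enlarged infinitely often, the `j`-th time so that what
  remains has a cover of order at most `n + 1` and mesh less than `1 / (j + 1)` (`dim_step`).
* Hereditary indecomposability. The same enlargements make the partition crooked with respect to
  every member `g j` of a dense sequence of real functions (`crook_step`). If the crooked set
  contained two subcontinua `E`, `F` with connected union, neither inside the other, a function `g j`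
  which is low at a point of `E \ F`, high at a point of `F \ E`, not high on `E` and not low on `F`
  would contradict crookedness (`nested_of_crook`). Both properties are obtained together in
  `exists_crooked_partition`, which is applied to the opposite faces of the last coordinate.
* Lower bound. Let `𝒰` be a finite cover of the power by balls meeting no two opposite faces. A
  partition `K` between the opposite faces of the last coordinate has no closed cover of order at
  most `n` refining `𝒰` (`lower_bound`). This rests on a Poincaré–Miranda theorem for powers of
  continua (`miranda`), which is proved by evaluating a cup product of mod 2 cochains on a
  triangulated grid spanned by a fine chain of points from `a` to `b` (`gridEval_cupAll`).
* Cantor manifolds. By Zorn's lemma `K` contains a minimal closed set `X` without a closed cover of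
  order at most `n` refining `𝒰` (`exists_minimal`). If a closed set of dimension at most `n - 2`
  separated `X`, then `X` would be the union of two proper closed subsets meeting in this set;
  by minimality both have such covers, and these can be merged into one of `X` (`merge`,
  `isConnected_diff`), a contradiction.
-/

open Set Topology TopologicalSpace

universe u v

/-- A continuum: a nonempty compact connected metrizable topological space. -/
def IsContinuum (X : Type u) [TopologicalSpace X] : Prop :=
  Nonempty X ∧ CompactSpace X ∧ ConnectedSpace X ∧ MetrizableSpace X

/-- A subcontinuum of a space: a nonempty compact connected subset. -/
def IsSubcontinuum {X : Type u} [TopologicalSpace X] (S : Set X) : Prop :=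
  IsCompact S ∧ IsConnected S

/-- The subset `S` is indecomposable: it is not the union of two proper subcontinua. -/
def IsIndecomposableSet {X : Type u} [TopologicalSpace X] (S : Set X) : Prop :=
  ¬ ∃ A B : Set X, IsSubcontinuum A ∧ IsSubcontinuum B ∧
      A ⊆ S ∧ B ⊆ S ∧ A ≠ S ∧ B ≠ S ∧ A ∪ B = S

/-- An indecomposable space. -/
def IsIndecomposable (X : Type u) [TopologicalSpace X] : Prop :=
  IsIndecomposableSet (Set.univ : Set X)

/-- A hereditarily indecomposable space: every subcontinuum is indecomposable. -/
def HereditarilyIndecomposable (X : Type u) [TopologicalSpace X] : Prop :=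
  ∀ S : Set X, IsSubcontinuum S → IsIndecomposableSet S

/-- Covering dimension `≤ n`: every finite open cover admits a finite open refinement
in which every point lies in at most `n + 1` members. -/
def CovDimLE (X : Type u) [TopologicalSpace X] (n : ℕ) : Prop :=
  ∀ (ι : Type) (U : ι → Set X), Finite ι → (∀ i, IsOpen (U i)) → (⋃ i, U i) = Set.univ →
    ∃ (κ : Type) (V : κ → Set X), Finite κ ∧ (∀ j, IsOpen (V j)) ∧ (⋃ j, V j) = Set.univ ∧
      (∀ j, ∃ i, V j ⊆ U i) ∧ ∀ x : X, Nat.card {j : κ // x ∈ V j} ≤ n + 1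

/-- Covering dimension `≤ m` for an integer `m`; for `m < 0` this means the space is empty. -/
def CovDimLEInt (X : Type u) [TopologicalSpace X] (m : ℤ) : Prop :=
  (0 ≤ m ∧ CovDimLE X m.toNat) ∨ (m < 0 ∧ IsEmpty X)

/-- Covering dimension equal to `n`: `dim X ≤ n` but not `dim X ≤ n - 1`. -/
def CovDimEq (X : Type u) [TopologicalSpace X] (n : ℕ) : Prop :=
  CovDimLE X n ∧ ¬ CovDimLEInt X ((n : ℤ) - 1)

/-- An infinite-dimensional space: `dim X ≤ n` holds for no natural number `n`. -/
def InfiniteDimensional (X : Type u) [TopologicalSpace X] : Prop :=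
  ∀ n : ℕ, ¬ CovDimLE X n

/-- An `n`-dimensional Cantor manifold: a compact metrizable space with `dim X = n` such that
no closed subset `L` with `dim L ≤ n - 2` disconnects `X`, i.e. `X ∖ L` is connected. -/
def IsCantorManifold (X : Type u) [TopologicalSpace X] (n : ℕ) : Prop :=
  CompactSpace X ∧ MetrizableSpace X ∧ CovDimEq X n ∧
    ∀ L : Set X, IsClosed L → CovDimLEInt (↥L) ((n : ℤ) - 2) → IsConnected (Lᶜ : Set X)

/-- `L` is a partition between `A` and `B`: a closed set whose complement is the union of two
disjoint open sets containing `A` and `B` respectively. -/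
def IsPartitionBetween {X : Type u} [TopologicalSpace X] (L A B : Set X) : Prop :=
  IsClosed L ∧ ∃ U V : Set X, IsOpen U ∧ IsOpen V ∧ A ⊆ U ∧ B ⊆ V ∧ Disjoint U V ∧
    Lᶜ = U ∪ V

/-- A strongly infinite-dimensional space. -/
def StronglyInfiniteDimensional (X : Type u) [TopologicalSpace X] : Prop :=
  ∃ A B : ℕ → Set X,
    (∀ i, IsClosed (A i) ∧ IsClosed (B i) ∧ Disjoint (A i) (B i)) ∧
    ∀ L : ℕ → Set X, (∀ i, IsPartitionBetween (L i) (A i) (B i)) → (⋂ i, L i).Nonempty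

/-- A hereditarily strongly infinite-dimensional space: every subspace is either of covering
dimension `≤ 0` or strongly infinite-dimensional. -/
def HereditarilyStronglyInfiniteDimensional (X : Type u) [TopologicalSpace X] : Prop :=
  ∀ S : Set X, CovDimLE (↥S) 0 ∨ StronglyInfiniteDimensional (↥S)

/-- An infinite-dimensional Cantor manifold: an infinite-dimensional continuum such that every
closed subset disconnecting it is infinite-dimensional. -/
def IsInfiniteDimensionalCantorManifold (X : Type u) [TopologicalSpace X] : Prop :=
  IsContinuum X ∧ InfiniteDimensional X ∧
    ∀ L : Set X, IsClosed L → ¬ IsConnected (Lᶜ : Set X) → InfiniteDimensional (↥L)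

/-- A hereditarily strongly infinite-dimensional Cantor manifold. -/
def IsHSIDCantorManifold (X : Type u) [TopologicalSpace X] : Prop :=
  IsInfiniteDimensionalCantorManifold X ∧ HereditarilyStronglyInfiniteDimensional X

/-- A terminal subcontinuum: a subcontinuum `Y` such that every subcontinuum meeting both `Y`
and its complement contains `Y`. -/
def IsTerminalSubcontinuum {X : Type u} [TopologicalSpace X] (Y : Set X) : Prop :=
  IsSubcontinuum Y ∧
    ∀ Z : Set X, IsSubcontinuum Z → (Z ∩ Y).Nonempty → (Z \ Y).Nonempty → Y ⊆ Z

/-- An atomic map: a continuous map all of whose fibers are terminal subcontinua. -/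
def IsAtomicMap {M : Type u} {X : Type v} [TopologicalSpace M] [TopologicalSpace X]
    (p : M → X) : Prop :=
  Continuous p ∧ ∀ x : X, IsTerminalSubcontinuum (p ⁻¹' ({x} : Set X))

/-- A strongly chaotic space: for any two disjoint subsets `U`, `V` with `U` nonempty open,
there is no homeomorphism of `U` onto `V`. -/
def StronglyChaotic (X : Type u) [TopologicalSpace X] : Prop :=
  ∀ U V : Set X, Disjoint U V → U.Nonempty → IsOpen U → IsEmpty (↥U ≃ₜ ↥V)

/-- `Y` embeds in `Z`: there is a homeomorphism of `Y` onto a subspace of `Z`. -/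
def EmbedsIn (Y : Type u) (Z : Type v) [TopologicalSpace Y] [TopologicalSpace Z] : Prop :=
  ∃ f : Y → Z, Topology.IsEmbedding f

/-- `p : M → X` exhibits `M` as a pseudosuspension of `A` over `X` at `a`: `M` is a continuum,
`p` is an atomic surjection, `p ⁻¹ (a)` is homeomorphic to `A`, and `p` restricted to
`p ⁻¹ (X ∖ {a})` is a homeomorphism onto `X ∖ {a}`. -/
def IsPseudosuspension {X : Type u} {M : Type v} [TopologicalSpace X] [TopologicalSpace M]
    (A : Type w) [TopologicalSpace A] (a : X) (p : M → X) : Prop :=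
  IsContinuum M ∧ Function.Surjective p ∧ IsAtomicMap p ∧
    Nonempty (↥(p ⁻¹' ({a} : Set X)) ≃ₜ A) ∧
    IsHomeomorph (Set.restrictPreimage ({a}ᶜ : Set X) p)

/-- A weakly confluent map: every subcontinuum of the codomain is the image of some
subcontinuum of the domain. -/
def WeaklyConfluent {X : Type u} {Y : Type v} [TopologicalSpace X] [TopologicalSpace Y]
    (f : X → Y) : Prop :=
  ∀ B : Set Y, IsSubcontinuum B → ∃ A : Set X, IsSubcontinuum A ∧ f '' A = B

/-- `W` is a compactification of the ray with ray part `L`: `W` is compact metrizable and `L`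
is a dense open subset homeomorphic to the half-line `[0, ∞)`. -/
def IsRayCompactification (W : Type u) [TopologicalSpace W] (L : Set W) : Prop :=
  CompactSpace W ∧ MetrizableSpace W ∧ IsOpen L ∧ Dense L ∧
    Nonempty (↥L ≃ₜ ↥(Set.Ici (0 : ℝ)))

/-- A countable-dimensional space: the union of countably many finite-dimensional subspaces. -/
def CountableDimensional (X : Type u) [TopologicalSpace X] : Prop :=
  ∃ S : ℕ → Set X, (⋃ i, S i) = Set.univ ∧ ∀ i, ∃ n : ℕ, CovDimLE (↥(S i)) n

/-- Small transfinite inductive dimension `ind X ≤ α`. -/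
def IndLE (α : Ordinal.{u}) (X : Type u) [TopologicalSpace X] : Prop :=
  ∀ (x : X) (V : Set X), IsOpen V → x ∈ V →
    ∃ U : Set X, IsOpen U ∧ x ∈ U ∧ U ⊆ V ∧
      ∃ β : Ordinal.{u}, ∃ _ : β < α, IndLE β (↥(frontier U))
termination_by α

/-- Small transfinite inductive dimension `ind X = α`. -/
def IndEq (α : Ordinal.{u}) (X : Type u) [TopologicalSpace X] : Prop :=
  IndLE α X ∧ ∀ β : Ordinal.{u}, β < α → ¬ IndLE β X

/-- A bundled topological space. -/
structure TopSpace : Type 1 where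
  carrier : Type
  [topology : TopologicalSpace carrier]

attribute [instance] TopSpace.topology

instance : CoeSort TopSpace Type := ⟨TopSpace.carrier⟩


namespace HICantor

/-! ### Finite closed covers of bounded order -/

section Covers

variable {M : Type} [MetricSpace M]

/-- `HasCov p K r`: the set `K` is covered by a finite family of closed subsets of the ambient
space, all satisfying `p`, such that every point of the ambient space lies in at most `r` of
them. -/
def HasCov (p : Set M → Prop) (K : Set M) (r : ℕ) : Prop :=
  ∃ (κ : Type) (F : κ → Set M), Finite κ ∧ (∀ j, IsClosed (F j)) ∧ K ⊆ ⋃ j, F j ∧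
    (∀ j, p (F j)) ∧ ∀ x, {j | x ∈ F j}.ncard ≤ r

/-- The set is contained in a member of the family `U`. -/
def Refines {ι : Type} (U : ι → Set M) (S : Set M) : Prop := ∃ i, S ⊆ U i

/-- All distances between points of the set are less than `ε`. -/
def Small (ε : ℝ) (S : Set M) : Prop := ∀ x ∈ S, ∀ y ∈ S, dist x y < ε

lemma HasCov.mono_set {p : Set M → Prop} {K L : Set M} {r : ℕ} (h : HasCov p K r) (hLK : L ⊆ K) :
    HasCov p L r := by
  obtain ⟨κ, F, h1, h2, h3, h4⟩ := h
  exact ⟨κ, F, h1, h2, hLK.trans h3, h4⟩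

lemma hasCov_empty (p : Set M → Prop) (r : ℕ) : HasCov p ∅ r :=
  ⟨Empty, fun _ => ∅, inferInstance, fun j => j.elim, empty_subset _, fun j => j.elim,
    fun x => by simp⟩

lemma Small.mono {ε : ℝ} {S T : Set M} (h : Small ε T) (hST : S ⊆ T) : Small ε S :=
  fun x hx y hy => h x (hST hx) y (hST hy)

lemma Small.thickening {ε : ℝ} {S : Set M} (h : Small (ε / 2) S) :
    Small ε (Metric.thickening (ε / 4) S) := by
  intro x hx y hy
  obtain ⟨x', hx', h1⟩ := Metric.mem_thickening_iff.1 hx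
  obtain ⟨y', hy', h2⟩ := Metric.mem_thickening_iff.1 hy
  have h3 := h x' hx' y' hy'
  have h4 := dist_triangle4 x x' y' y
  rw [dist_comm y y'] at h2
  linarith

lemma ncard_le_of_imp {κ : Type} [Finite κ] {s t : Set κ} {r : ℕ} (h : s ⊆ t) (ht : t.ncard ≤ r) :
    s.ncard ≤ r :=
  (Set.ncard_le_ncard h (Set.toFinite _)).trans ht

/-- A bound on the covering dimension of a closed subspace gives closed covers of bounded order
in the ambient space. -/
lemma hasCov_of_covDimLE {Z : Type} [TopologicalSpace Z] {e : Z → M} (he : IsClosedEmbedding e)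
    {r : ℕ} (h : CovDimLE Z r) {ι : Type} [Finite ι] {U : ι → Set M} (hU : ∀ i, IsOpen (U i))
    (hcov : range e ⊆ ⋃ i, U i) : HasCov (Refines U) (range e) (r + 1) := by
  obtain ⟨κ, V, hκ, hV, hVc, hVU, hVr⟩ := h ι (fun i => e ⁻¹' U i) inferInstance
    (fun i => (hU i).preimage he.continuous) (by
      rw [← preimage_iUnion]
      exact eq_univ_of_forall fun z => hcov (mem_range_self z))
  have : NormalSpace Z := he.normalSpace
  obtain ⟨C, hC, hCcl, hCV⟩ := exists_subset_iUnion_closed_subset (isClosed_univ (X := Z)) hV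
    (fun x _ => Set.toFinite _) hVc.ge
  refine ⟨κ, fun j => e '' C j, hκ, fun j => he.isClosedMap _ (hCcl j), ?_, ?_, ?_⟩
  · rintro _ ⟨z, rfl⟩
    obtain ⟨j, hj⟩ := mem_iUnion.1 (hC (mem_univ z))
    exact mem_iUnion.2 ⟨j, mem_image_of_mem e hj⟩
  · intro j
    obtain ⟨i, hi⟩ := hVU j
    exact ⟨i, image_subset_iff.2 ((hCV j).trans hi)⟩
  · intro x
    by_cases hx : ∃ z, e z = x
    · obtain ⟨z, rfl⟩ := hx
      refine ncard_le_of_imp (t := {j | z ∈ V j}) ?_ (hVr z)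
      rintro j ⟨z', hz', hzz⟩
      exact hCV j (he.injective hzz ▸ hz')
    · have : {j | x ∈ e '' C j} = ∅ := by
        ext j
        refine iff_of_false ?_ (notMem_empty _)
        rintro ⟨z, _, hz⟩
        exact hx ⟨z, hz⟩
      rw [this, ncard_empty]
      exact Nat.zero_le _

variable [CompactSpace M]

/-- Small thickenings of a finite closed family have the same incidence pattern as the family
itself, and stay inside given open neighbourhoods of its members. -/
lemma swell {κ : Type} [Finite κ] (F U : κ → Set M) (hF : ∀ j, IsClosed (F j))
    (hU : ∀ j, IsOpen (U j)) (hFU : ∀ j, F j ⊆ U j) :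
    ∃ δ > 0, ∀ x, ∃ z, ∀ j, x ∈ Metric.thickening δ (F j) → z ∈ F j ∧ x ∈ U j := by
  classical
  obtain ⟨δ, hδ, hleb⟩ := lebesgue_number_lemma_of_metric (s := (univ : Set M))
    (c := fun z : M => ⋂ j, if z ∈ F j then U j else (F j)ᶜ) isCompact_univ
    (by
      intro z
      refine isOpen_iInter_of_finite fun j => ?_
      split_ifs
      · exact hU j
      · exact (hF j).isOpen_compl)
    (by
      intro x _
      refine mem_iUnion.2 ⟨x, mem_iInter.2 fun j => ?_⟩
      split_ifs with h
      · exact hFU j h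
      · exact h)
  refine ⟨δ, hδ, fun x => ?_⟩
  obtain ⟨z, hz⟩ := hleb x (mem_univ x)
  refine ⟨z, fun j hj => ?_⟩
  obtain ⟨y, hy, hxy⟩ := Metric.mem_thickening_iff.1 hj
  have h1 := mem_iInter.1 (hz (show y ∈ Metric.ball x δ by
    rw [Metric.mem_ball, dist_comm]; exact hxy)) j
  have h2 := mem_iInter.1 (hz (Metric.mem_ball_self hδ)) j
  by_cases h : z ∈ F j
  · rw [if_pos h] at h2
    exact ⟨h, h2⟩
  · rw [if_neg h] at h1
    exact absurd hy h1

/-- A finite closed family of order at most `r` can be swollen to open sets `V j` and closed sets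
`C j ⊇ V j` inside given open neighbourhoods, without increasing the order. -/
lemma swell_order {κ : Type} [Finite κ] (F U : κ → Set M) (hF : ∀ j, IsClosed (F j))
    (hU : ∀ j, IsOpen (U j)) (hFU : ∀ j, F j ⊆ U j) {r : ℕ} (hr : ∀ x, {j | x ∈ F j}.ncard ≤ r) :
    ∃ V C : κ → Set M, (∀ j, IsOpen (V j)) ∧ (∀ j, IsClosed (C j)) ∧ (∀ j, F j ⊆ V j) ∧
      (∀ j, V j ⊆ C j) ∧ (∀ j, C j ⊆ U j) ∧ ∀ x, {j | x ∈ C j}.ncard ≤ r := by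
  obtain ⟨δ, hδ, h⟩ := swell F U hF hU hFU
  have hsub : ∀ j, Metric.cthickening (δ / 2) (F j) ⊆ Metric.thickening δ (F j) := fun j =>
    Metric.cthickening_subset_thickening' hδ (half_lt_self hδ) _
  refine ⟨fun j => Metric.thickening (δ / 2) (F j), fun j => Metric.cthickening (δ / 2) (F j),
    fun j => Metric.isOpen_thickening, fun j => Metric.isClosed_cthickening,
    fun j => Metric.self_subset_thickening (half_pos hδ) _,
    fun j => Metric.thickening_subset_cthickening _ _, fun j x hx => ?_, fun x => ?_⟩
  · obtain ⟨z, hz⟩ := h x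
    exact (hz j (hsub j hx)).2
  · obtain ⟨z, hz⟩ := h x
    exact ncard_le_of_imp (fun j hj => (hz j (hsub j hj)).1) (hr z)

/-- A finite disjoint closed family can be swollen to a disjoint family of open sets inside given
open neighbourhoods. -/
lemma swell_disjoint {κ : Type} [Finite κ] (F U : κ → Set M) (hF : ∀ j, IsClosed (F j))
    (hU : ∀ j, IsOpen (U j)) (hFU : ∀ j, F j ⊆ U j) (hd : ∀ x i j, x ∈ F i → x ∈ F j → i = j) :
    ∃ V : κ → Set M, (∀ j, IsOpen (V j)) ∧ (∀ j, F j ⊆ V j) ∧ (∀ j, V j ⊆ U j) ∧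
      ∀ x i j, x ∈ V i → x ∈ V j → i = j := by
  obtain ⟨δ, hδ, h⟩ := swell F U hF hU hFU
  refine ⟨fun j => Metric.thickening δ (F j), fun j => Metric.isOpen_thickening,
    fun j => Metric.self_subset_thickening hδ _, fun j x hx => ?_, fun x i j hi hj => ?_⟩
  · obtain ⟨z, hz⟩ := h x
    exact (hz j hx).2
  · obtain ⟨z, hz⟩ := h x
    exact hd z i j (hz i hi).1 (hz j hj).1

/-- A cover refining a family of open sets persists, with the same order, on a neighbourhood. -/
lemma HasCov.exists_open {ι : Type} {U : ι → Set M} (hU : ∀ i, IsOpen (U i)) {K : Set M} {r : ℕ}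
    (h : HasCov (Refines U) K r) : ∃ O, IsOpen O ∧ K ⊆ O ∧ HasCov (Refines U) O r := by
  obtain ⟨κ, F, h1, h2, h3, h4, h5⟩ := h
  choose i hi using h4
  obtain ⟨V, C, hV, hC, hFV, hVC, hCU, hr⟩ := swell_order F (fun j => U (i j)) h2 (fun j => hU _)
    hi h5
  exact ⟨⋃ j, V j, isOpen_iUnion hV, h3.trans (iUnion_mono hFV), κ, C, h1, hC, iUnion_mono hVC,
    fun j => ⟨i j, hCU j⟩, hr⟩

lemma covDimLE_of_hasCov {X : Set M} {r : ℕ}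
    (h : ∀ (ι : Type) (U : ι → Set M), Finite ι → (∀ i, IsOpen (U i)) → X ⊆ ⋃ i, U i →
      HasCov (Refines U) X (r + 1)) : CovDimLE (↥X) r := by
  intro ι U hι hU hcov
  choose U' hU' hUU' using fun i => isOpen_induced_iff.1 (hU i)
  obtain ⟨κ, F, h1, h2, h3, h4, h5⟩ := h ι U' hι hU' (by
    intro x hx
    have : (⟨x, hx⟩ : X) ∈ ⋃ i, U i := hcov ▸ mem_univ _
    obtain ⟨i, hi⟩ := mem_iUnion.1 this
    rw [← hUU' i] at hi
    exact mem_iUnion.2 ⟨i, hi⟩)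
  choose i hi using h4
  obtain ⟨V, C, hV, hC, hFV, hVC, hCU, hr⟩ := swell_order F (fun j => U' (i j)) h2
    (fun j => hU' _) hi h5
  refine ⟨κ, fun j => Subtype.val ⁻¹' V j, h1, fun j => (hV j).preimage continuous_subtype_val,
    ?_, fun j => ⟨i j, ?_⟩, fun x => ?_⟩
  · refine eq_univ_of_forall fun x => ?_
    obtain ⟨j, hj⟩ := mem_iUnion.1 (h3 x.2)
    exact mem_iUnion.2 ⟨j, hFV j hj⟩
  · rw [← hUU' (i j)]
    exact preimage_mono ((hVC j).trans (hCU j))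
  · exact ncard_le_of_imp (fun j hj => hVC j hj) (hr x)

/-- A compact set with covers of order at most `r` and arbitrarily small mesh has covers of order at
most `r` refining any given open cover. -/
lemma hasCov_of_small {X : Set M} (hX : IsClosed X) {r : ℕ}
    (h : ∀ ε > 0, HasCov (Small ε) X r) (ι : Type) (U : ι → Set M)
    (hU : ∀ i, IsOpen (U i)) (hcov : X ⊆ ⋃ i, U i) : HasCov (Refines U) X r := by
  obtain ⟨δ, hδ, hleb⟩ := lebesgue_number_lemma_of_metric hX.isCompact hU hcov
  obtain ⟨κ, F, h1, h2, h3, h4, h5⟩ := h δ hδ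
  refine ⟨{j // (F j ∩ X).Nonempty}, fun j => F j ∩ X, inferInstance, fun j => (h2 j).inter hX, ?_,
    ?_, ?_⟩
  · intro x hx
    obtain ⟨j, hj⟩ := mem_iUnion.1 (h3 hx)
    exact mem_iUnion.2 ⟨⟨j, x, hj, hx⟩, hj, hx⟩
  · rintro ⟨j, x, hxF, hxX⟩
    obtain ⟨i, hi⟩ := hleb x hxX
    exact ⟨i, fun y hy => hi (h4 j y hy.1 x hxF)⟩
  · intro x
    refine le_trans ?_ (h5 x)
    exact Set.ncard_le_ncard_of_injOn Subtype.val (fun j hj => hj.1)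
      (Subtype.val_injective.injOn) (Set.toFinite _)

end Covers

/-! ### A combinatorial Poincaré–Miranda theorem for products of continua -/

section Cochains

variable {α Y : Type*}

/-- The mod 2 coboundary of a cochain `F` on ordered simplices, encoded as lists of vertices:
`coboundary F l` is the sum of the values of `F` on the lists got from `l` by deleting one
entry. -/
def coboundary : (List α → ZMod 2) → List α → ZMod 2
  | _, [] => 0
  | F, v :: l => F l + coboundary (fun t => F (v :: t)) l

/-- The cup product `dσ ∪ F` of the coboundary of the `0`-cochain `σ` with `F`. -/
def dcup (σ : α → ZMod 2) (F : List α → ZMod 2) : List α → ZMod 2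
  | v :: w :: l => (σ v + σ w) * F (w :: l)
  | _ => 0

/-- The cup product `σ ∪ F` of the `0`-cochain `σ` with `F`. -/
def zcup (σ : α → ZMod 2) (F : List α → ZMod 2) : List α → ZMod 2
  | v :: l => σ v * F (v :: l)
  | [] => 0

/-- The iterated cup product `dσ₁ ∪ ⋯ ∪ dσₘ`. -/
def cupAll : List (α → ZMod 2) → List α → ZMod 2
  | [], [_] => 1
  | [], _ => 0
  | σ :: L, l => dcup σ (cupAll L) l

lemma coboundary_zero (l : List α) : coboundary (fun _ => 0) l = 0 := by
  induction l with
  | nil => rfl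
  | cons v l ih => simp [coboundary, ih]

lemma coboundary_add (F G : List α → ZMod 2) (l : List α) :
    coboundary (fun t => F t + G t) l = coboundary F l + coboundary G l := by
  induction l generalizing F G with
  | nil => simp [coboundary]
  | cons v l ih => simp only [coboundary, ih]; ring

lemma coboundary_mul (c : ZMod 2) (F : List α → ZMod 2) (l : List α) :
    coboundary (fun t => c * F t) l = c * coboundary F l := by
  induction l generalizing F with
  | nil => simp [coboundary]
  | cons v l ih => simp only [coboundary, ih]; ring

lemma cupAll_nil (L : List (α → ZMod 2)) : cupAll L ([] : List α) = 0 := by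
  cases L <;> rfl

lemma coboundary_dcup (σ : α → ZMod 2) (F : List α → ZMod 2)
    (h : ∀ l, coboundary F l = 0) (l : List α) : coboundary (dcup σ F) l = 0 := by
  match l with
  | [] => rfl
  | [v] => simp [coboundary, dcup]
  | [v, w] => simp [coboundary, dcup]
  | v :: w :: u :: l =>
    have h1 := h (w :: u :: l)
    simp only [coboundary, dcup, coboundary_mul] at h1 ⊢
    have h2 : F (u :: l) = F (w :: l) + coboundary (fun t => F (w :: u :: t)) l := by
      have := CharTwo.add_self_eq_zero (F (w :: l) + coboundary (fun t => F (w :: u :: t)) l)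
      linear_combination h1 - this
    have h3 := CharTwo.add_self_eq_zero (σ w)
    have h4 := CharTwo.add_self_eq_zero (σ v)
    have h5 := CharTwo.add_self_eq_zero (σ u)
    rw [h2]
    linear_combination (F (w :: l) + coboundary (fun t => F (w :: u :: t)) l) * (h3 + h4 + h5)

lemma coboundary_cupAll (L : List (α → ZMod 2)) (l : List α) : coboundary (cupAll L) l = 0 := by
  induction L generalizing l with
  | nil =>
    match l with
    | [] => rfl
    | [v] => rfl
    | [v, w] => simp only [coboundary, cupAll]; decide
    | v :: w :: u :: l => simp [coboundary, cupAll, coboundary_zero]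
  | cons σ L ih => exact coboundary_dcup σ _ ih l

/-- The Leibniz rule `δ(σ ∪ F) = dσ ∪ F` for a cocycle `F`. -/
lemma coboundary_zcup (σ : α → ZMod 2) (F : List α → ZMod 2)
    (h : ∀ l, coboundary F l = 0) (l : List α) : coboundary (zcup σ F) l = dcup σ F l := by
  match l with
  | [] => rfl
  | [v] => simp [coboundary, zcup, dcup]
  | v :: w :: l =>
    have h1 := h (v :: w :: l)
    simp only [coboundary, zcup, dcup, coboundary_mul] at h1 ⊢
    have := CharTwo.add_self_eq_zero (σ v * F (w :: l))
    linear_combination σ v * h1 - this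

/-- A cup product of coboundaries vanishes on a simplex on which one of the factors is the
coboundary of a constant function. -/
lemma cupAll_const {L : List (α → ZMod 2)} {σ : α → ZMod 2} (hσ : σ ∈ L) {l : List α}
    (hl : ∀ v ∈ l, ∀ w ∈ l, σ v = σ w) : cupAll L l = 0 := by
  induction L generalizing l with
  | nil => simp at hσ
  | cons τ L ih =>
    match l with
    | [] => rfl
    | [v] => rfl
    | v :: w :: l =>
      simp only [cupAll, dcup]
      rcases List.mem_cons.1 hσ with rfl | h
      · rw [hl v (by simp) w (by simp), CharTwo.add_self_eq_zero, zero_mul]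
      · rw [ih h (fun x hx y hy => hl x (List.mem_cons_of_mem _ hx) y (List.mem_cons_of_mem _ hy)),
          mul_zero]

lemma cupAll_map {β : Type*} (g : β → α) (L : List (α → ZMod 2)) (l : List β) :
    cupAll L (l.map g) = cupAll (L.map (fun σ => σ ∘ g)) l := by
  induction L generalizing l with
  | nil =>
    match l with
    | [] => rfl
    | [v] => rfl
    | v :: w :: l => rfl
  | cons σ L ih =>
    match l with
    | [] => rfl
    | [v] => rfl
    | v :: w :: l =>
      have := ih (w :: l)
      simp only [List.map_cons] at this
      simp only [List.map_cons, cupAll, dcup, this, Function.comp]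

/-- The prism operator, dually: `prism s t F` evaluates `F` on the standard subdivision of the
prism with base `l` over the edge from `s` to `t` of a new coordinate. -/
def prism {m : ℕ} (s t : Y) : (List (Fin (m + 1) → Y) → ZMod 2) → List (Fin m → Y) → ZMod 2
  | _, [] => 0
  | F, v :: l => F ((Fin.cons s v : Fin (m + 1) → Y) :: (Fin.cons t v : Fin (m + 1) → Y) ::
      l.map (fun w => (Fin.cons t w : Fin (m + 1) → Y))) +
      prism s t (fun u => F ((Fin.cons s v : Fin (m + 1) → Y) :: u)) l

lemma prism_add {m : ℕ} (s t : Y) (F G : List (Fin (m + 1) → Y) → ZMod 2) (l) :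
    prism s t (fun u => F u + G u) l = prism s t F l + prism s t G l := by
  induction l generalizing F G with
  | nil => simp [prism]
  | cons v l ih => simp only [prism, ih]; ring

/-- The prism formula: the boundary of a prism consists of its side, its top and its bottom. -/
lemma prism_coboundary {m : ℕ} (s t : Y) (F : List (Fin (m + 1) → Y) → ZMod 2) (l) :
    prism s t (coboundary F) l = coboundary (prism s t F) l +
      (F (l.map (fun w => (Fin.cons t w : Fin (m + 1) → Y))) +
        F (l.map (fun w => (Fin.cons s w : Fin (m + 1) → Y)))) := by
  induction l generalizing F with
  | nil => simp [prism, coboundary, CharTwo.add_self_eq_zero]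
  | cons v l ih =>
    simp only [prism, coboundary, List.map_cons, coboundary_add, prism_add]
    rw [ih]
    have h1 : coboundary (fun u : List (Fin m → Y) =>
        F ((Fin.cons s v : Fin (m + 1) → Y) :: (Fin.cons t v : Fin (m + 1) → Y) ::
          u.map (fun w => (Fin.cons t w : Fin (m + 1) → Y)))) l =
      coboundary (fun u => F ((Fin.cons s v : Fin (m + 1) → Y) ::
        (Fin.cons t v : Fin (m + 1) → Y) :: u))
        (l.map (fun w => (Fin.cons t w : Fin (m + 1) → Y))) := by
      have key : ∀ (G : List (Fin (m + 1) → Y) → ZMod 2) (l : List (Fin m → Y)),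
          coboundary (fun u => G (u.map (fun w => (Fin.cons t w : Fin (m + 1) → Y)))) l =
          coboundary G (l.map (fun w => (Fin.cons t w : Fin (m + 1) → Y))) := by
        intro G l
        induction l generalizing G with
        | nil => rfl
        | cons v l ih =>
          simp only [coboundary, List.map_cons]
          rw [← ih (fun u => G ((Fin.cons t v : Fin (m + 1) → Y) :: u))]
      exact key (fun u => F ((Fin.cons s v : Fin (m + 1) → Y) ::
        (Fin.cons t v : Fin (m + 1) → Y) :: u)) l
    rw [h1]
    have := CharTwo.add_self_eq_zero (F ((Fin.cons s v : Fin (m + 1) → Y) ::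
      l.map (fun w => (Fin.cons t w : Fin (m + 1) → Y))))
    linear_combination this

/-- A cochain with nonzero value on the prism over `l` is nonzero on a simplex whose vertices lie
over vertices of `l`. -/
lemma prism_ne_zero {m : ℕ} {s t : Y} {F : List (Fin (m + 1) → Y) → ZMod 2} {l}
    (h : prism s t F l ≠ 0) : ∃ l', F l' ≠ 0 ∧
      ∀ w ∈ l', ∃ v ∈ l, w = Fin.cons s v ∨ w = Fin.cons t v := by
  induction l generalizing F with
  | nil => simp [prism] at h
  | cons v l ih =>
    simp only [prism] at h
    by_cases h1 : F ((Fin.cons s v : Fin (m + 1) → Y) :: (Fin.cons t v : Fin (m + 1) → Y) ::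
      l.map (fun w => (Fin.cons t w : Fin (m + 1) → Y))) = 0
    · rw [h1, zero_add] at h
      obtain ⟨l', hl', hl''⟩ := ih h
      refine ⟨_, hl', ?_⟩
      intro w hw
      rcases List.mem_cons.1 hw with rfl | hw
      · exact ⟨v, by simp, Or.inl rfl⟩
      · obtain ⟨x, hx, hx'⟩ := hl'' w hw
        exact ⟨x, List.mem_cons_of_mem _ hx, hx'⟩
    · refine ⟨_, h1, ?_⟩
      intro w hw
      simp only [List.mem_cons, List.mem_map] at hw
      rcases hw with rfl | rfl | ⟨x, hx, rfl⟩
      · exact ⟨v, by simp, Or.inl rfl⟩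
      · exact ⟨v, by simp, Or.inr rfl⟩
      · exact ⟨x, by simp [hx], Or.inr rfl⟩

/-- Evaluation of a cochain on the `m`-fold product of the chain `c 0, c 1, …, c N` of edges,
triangulated by iterated prisms. -/
def gridEval (c : ℕ → Y) (N : ℕ) : (m : ℕ) → (List (Fin m → Y) → ZMod 2) → ZMod 2
  | 0, F => F [Fin.elim0]
  | m + 1, F => ∑ j ∈ Finset.range N, gridEval c N m (prism (c j) (c (j + 1)) F)

lemma gridEval_add (c : ℕ → Y) (N m : ℕ) (F G : List (Fin m → Y) → ZMod 2) :
    gridEval c N m (fun l => F l + G l) = gridEval c N m F + gridEval c N m G := by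
  induction m with
  | zero => rfl
  | succ m ih =>
    simp only [gridEval, ← Finset.sum_add_distrib]
    refine Finset.sum_congr rfl fun j _ => ?_
    rw [← ih]
    congr 1
    funext l
    exact prism_add _ _ F G l

/-- A cochain with nonzero value on the grid is nonzero on a simplex contained in a single cell. -/
lemma gridEval_ne_zero {c : ℕ → Y} {N m : ℕ} {F : List (Fin m → Y) → ZMod 2}
    (h : gridEval c N m F ≠ 0) : ∃ l, F l ≠ 0 ∧
      ∀ i, ∃ j < N, ∀ v ∈ l, v i = c j ∨ v i = c (j + 1) := by
  induction m with
  | zero => exact ⟨_, h, fun i => i.elim0⟩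
  | succ m ih =>
    obtain ⟨j, hj, hj'⟩ := Finset.exists_ne_zero_of_sum_ne_zero h
    obtain ⟨l, hl, hl'⟩ := ih hj'
    obtain ⟨l', h1, h2⟩ := prism_ne_zero hl
    refine ⟨l', h1, ?_⟩
    intro i
    refine Fin.cases ?_ (fun i => ?_) i
    · refine ⟨j, Finset.mem_range.1 hj, fun w hw => ?_⟩
      obtain ⟨v, _, rfl | rfl⟩ := h2 w hw <;> simp
    · obtain ⟨k, hk, hk'⟩ := hl' i
      refine ⟨k, hk, fun w hw => ?_⟩
      obtain ⟨v, hv, rfl | rfl⟩ := h2 w hw <;> simpa using hk' v hv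

lemma gridEval_zero (c : ℕ → Y) (N m : ℕ) {F : List (Fin m → Y) → ZMod 2} (hF : ∀ l, F l = 0) :
    gridEval c N m F = 0 := by
  by_contra h
  obtain ⟨l, hl, _⟩ := gridEval_ne_zero h
  exact hl (hF l)

/-- Stokes' formula in the direction of the first coordinate. -/
lemma gridEval_coboundary_succ (c : ℕ → Y) (N m : ℕ) (F : List (Fin (m + 1) → Y) → ZMod 2) :
    gridEval c N (m + 1) (coboundary F) =
      (∑ j ∈ Finset.range N, gridEval c N m (coboundary (prism (c j) (c (j + 1)) F))) +
      (gridEval c N m (fun l => F (l.map (fun w => (Fin.cons (c N) w : Fin (m + 1) → Y)))) -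
       gridEval c N m (fun l => F (l.map (fun w => (Fin.cons (c 0) w : Fin (m + 1) → Y))))) := by
  rw [← Finset.sum_range_sub (fun j => gridEval c N m
    (fun l => F (l.map (fun w => (Fin.cons (c j) w : Fin (m + 1) → Y))))), ← Finset.sum_add_distrib]
  simp only [gridEval]
  refine Finset.sum_congr rfl fun j _ => ?_
  rw [CharTwo.sub_eq_add, ← gridEval_add, ← gridEval_add]
  congr 1
  funext l
  exact prism_coboundary _ _ F l

/-- A coboundary `δF` evaluates to zero if `F` vanishes on all simplices lying in a face of the
grid. -/
lemma gridEval_coboundary (c : ℕ → Y) (N m : ℕ) (F : List (Fin m → Y) → ZMod 2) (h0 : F [] = 0)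
    (hF : ∀ l i, ((∀ v ∈ l, v i = c 0) ∨ (∀ v ∈ l, v i = c N)) → F l = 0) :
    gridEval c N m (coboundary F) = 0 := by
  induction m with
  | zero => simp [gridEval, coboundary, h0]
  | succ m ih =>
    rw [gridEval_coboundary_succ, gridEval_zero c N m (fun l => hF _ 0 (Or.inr (by simp))),
      gridEval_zero c N m (fun l => hF _ 0 (Or.inl (by simp))), sub_zero, add_zero]
    refine Finset.sum_eq_zero fun j _ => ih _ rfl ?_
    intro l i hl
    by_contra hne
    obtain ⟨l', h1, h2⟩ := prism_ne_zero hne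
    refine h1 (hF l' i.succ (hl.imp ?_ ?_)) <;>
    · intro h w hw
      obtain ⟨v, hv, rfl | rfl⟩ := h2 w hw <;> simpa using h v hv

/-- If each `σ i` is `0` on the face `x i = c 0` and `1` on the face `x i = c N` of the grid, then
`dσ₁ ∪ ⋯ ∪ dσₘ` evaluates to `1` on the grid. -/
lemma gridEval_cupAll (c : ℕ → Y) (N m : ℕ) (σ : Fin m → (Fin m → Y) → ZMod 2)
    (h0 : ∀ i x, x i = c 0 → σ i x = 0) (h1 : ∀ i x, x i = c N → σ i x = 1) :
    gridEval c N m (cupAll (List.ofFn σ)) = 1 := by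
  induction m with
  | zero => simp [gridEval, cupAll]
  | succ m ih =>
    rw [List.ofFn_succ]
    set L := List.ofFn (fun i => σ (Fin.succ i)) with hL
    have e : cupAll (σ 0 :: L) = coboundary (zcup (σ 0) (cupAll L)) := by
      funext l
      rw [coboundary_zcup (σ 0) (cupAll L) (coboundary_cupAll L)]
      rfl
    rw [e, gridEval_coboundary_succ]
    have z1 : gridEval c N m (fun l => zcup (σ 0) (cupAll L)
        (l.map (fun w => (Fin.cons (c 0) w : Fin (m + 1) → Y)))) = 0 := by
      refine gridEval_zero c N m fun l => ?_
      cases l with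
      | nil => rfl
      | cons v l => simp only [List.map_cons, zcup]; rw [h0 0 _ (by simp), zero_mul]
    have z2 : gridEval c N m (fun l => zcup (σ 0) (cupAll L)
        (l.map (fun w => (Fin.cons (c N) w : Fin (m + 1) → Y)))) = 1 := by
      rw [← ih (fun i w => σ i.succ (Fin.cons (c N) w)) (fun i x hx => h0 _ _ (by simpa using hx))
        (fun i x hx => h1 _ _ (by simpa using hx))]
      congr 1
      funext l
      have e2 : cupAll (List.ofFn fun i w => σ (Fin.succ i) (Fin.cons (c N) w)) l =
          cupAll L (l.map (fun w => (Fin.cons (c N) w : Fin (m + 1) → Y))) := by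
        rw [cupAll_map, hL, List.map_ofFn]
        rfl
      rw [e2]
      cases l with
      | nil => simp [zcup, cupAll_nil]
      | cons v l => simp only [List.map_cons, zcup]; rw [h1 0 _ (by simp), one_mul]
    rw [z1, z2, Finset.sum_eq_zero, zero_add, sub_zero]
    intro j _
    refine gridEval_coboundary c N m _ rfl ?_
    intro l i hl
    by_contra hne
    obtain ⟨l', hl1, hl2⟩ := prism_ne_zero hne
    refine hl1 ?_
    cases l' with
    | nil => rfl
    | cons u l' =>
      simp only [zcup]
      rw [cupAll_const (σ := σ i.succ) (by rw [hL, List.mem_ofFn]; exact ⟨i, rfl⟩), mul_zero]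
      rcases hl with hl | hl
      · have : ∀ w ∈ u :: l', σ i.succ w = 0 := by
          intro w hw
          obtain ⟨v, hv, rfl | rfl⟩ := hl2 w hw <;> exact h0 _ _ (by simpa using hl v hv)
        intro v hv w hw
        rw [this v hv, this w hw]
      · have : ∀ w ∈ u :: l', σ i.succ w = 1 := by
          intro w hw
          obtain ⟨v, hv, rfl | rfl⟩ := hl2 w hw <;> exact h1 _ _ (by simpa using hl v hv)
        intro v hv w hw
        rw [this v hv, this w hw]

end Cochains

section Miranda

variable {Y : Type*} [MetricSpace Y]

/-- Two points of a connected metric space are joined by chains of arbitrarily small steps. -/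
lemma exists_chain [ConnectedSpace Y] (a b : Y) {ε : ℝ} (hε : 0 < ε) :
    ∃ (c : ℕ → Y) (N : ℕ), c 0 = a ∧ c N = b ∧ ∀ j < N, dist (c j) (c (j + 1)) < ε := by
  set S : Set Y := {y | ∃ (c : ℕ → Y) (N : ℕ), c 0 = a ∧ c N = y ∧
    ∀ j < N, dist (c j) (c (j + 1)) < ε} with hS
  have step : ∀ x y, x ∈ S → dist x y < ε → y ∈ S := by
    rintro x y ⟨c, N, h0, hN, hc⟩ hxy
    refine ⟨Function.update c (N + 1) y, N + 1, by simp [Function.update, h0], by simp, ?_⟩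
    intro j hj
    rcases Nat.lt_succ_iff_lt_or_eq.1 hj with h | rfl
    · rw [Function.update_of_ne (by omega), Function.update_of_ne (by omega)]
      exact hc j h
    · rw [Function.update_of_ne (by omega), Function.update_self, hN]
      exact hxy
  have hclopen : IsClopen S := by
    constructor
    · rw [← isOpen_compl_iff, Metric.isOpen_iff]
      intro x hx
      refine ⟨ε, hε, fun y hy hyS => hx (step y x hyS hy)⟩
    · rw [Metric.isOpen_iff]
      intro x hx
      refine ⟨ε, hε, fun y hy => step x y hx (by rw [dist_comm]; exact hy)⟩
  have ha : a ∈ S := ⟨fun _ => a, 0, rfl, rfl, by simp⟩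
  have : S = univ := hclopen.eq_univ ⟨a, ha⟩
  have hb : b ∈ S := this ▸ mem_univ b
  exact hb

/-- The Poincaré–Miranda theorem for the `m`-th power of a continuum `Y`, with the
faces `x i = a` and `x i = b` in the role of the opposite faces of the cube. -/
theorem miranda [CompactSpace Y] [ConnectedSpace Y] (a b : Y) (m : ℕ)
    (P Q : Fin m → Set (Fin m → Y)) (hP : ∀ i, IsClosed (P i)) (hQ : ∀ i, IsClosed (Q i))
    (hPQ : ∀ i, P i ∪ Q i = univ) (ha : ∀ i x, x i = a → x ∉ Q i) (hb : ∀ i x, x i = b → x ∉ P i) :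
    ∃ x, ∀ i, x ∈ P i ∧ x ∈ Q i := by
  classical
  by_contra hcon
  push Not at hcon
  -- Otherwise the complements of the `P i` and `Q i` cover the product; apply the grid evaluation
  -- to a chain whose mesh is a Lebesgue number of this cover.
  obtain ⟨δ, hδ, hleb⟩ := lebesgue_number_lemma_of_metric (s := (univ : Set (Fin m → Y)))
    (c := fun p : Fin m × Bool => if p.2 then (P p.1)ᶜ else (Q p.1)ᶜ) isCompact_univ
    (by
      rintro ⟨i, _ | _⟩
      · exact (hQ i).isOpen_compl
      · exact (hP i).isOpen_compl)
    (by
      intro x _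
      obtain ⟨i, hi⟩ := hcon x
      by_cases h : x ∈ P i
      · exact mem_iUnion.2 ⟨(i, false), by simpa using hi h⟩
      · exact mem_iUnion.2 ⟨(i, true), by simpa using h⟩)
  obtain ⟨c, N, hc0, hcN, hc⟩ := exists_chain a b hδ
  set σ : Fin m → (Fin m → Y) → ZMod 2 := fun i x => if x ∈ P i then 0 else 1 with hσ
  have hval := gridEval_cupAll c N m σ
    (by
      intro i x hx
      have h1 := ha i x (hx.trans hc0)
      have h2 : x ∈ P i ∪ Q i := hPQ i ▸ mem_univ x
      simp [hσ, h2.resolve_right h1])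
    (by
      intro i x hx
      have h1 := hb i x (hx.trans hcN)
      simp [hσ, h1])
  obtain ⟨l, hl, hsmall⟩ := gridEval_ne_zero (hval.trans_ne one_ne_zero)
  have hdist : ∀ v ∈ l, ∀ w ∈ l, dist v w < δ := by
    intro v hv w hw
    rw [dist_pi_lt_iff hδ]
    intro i
    obtain ⟨j, hj, hj'⟩ := hsmall i
    have := hc j hj
    rcases hj' v hv with h1 | h1 <;> rcases hj' w hw with h2 | h2 <;> rw [h1, h2]
    · simpa using hδ
    · exact this
    · rw [dist_comm]; exact this
    · simpa using hδ
  have hne : l ≠ [] := by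
    rintro rfl
    exact hl (cupAll_nil _)
  obtain ⟨x, hx⟩ := List.exists_mem_of_ne_nil l hne
  obtain ⟨⟨i, t⟩, hi⟩ := hleb x (mem_univ _)
  refine hl (cupAll_const (σ := σ i) (by rw [List.mem_ofFn]; exact ⟨i, rfl⟩) ?_)
  have key : ∃ k, ∀ v ∈ l, σ i v = k := by
    cases t
    · refine ⟨0, fun v hv => ?_⟩
      have h1 : v ∉ Q i := by simpa using hi (hdist v hv x hx)
      have h2 : v ∈ P i ∪ Q i := hPQ i ▸ mem_univ v
      simp [hσ, h2.resolve_right h1]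
    · refine ⟨1, fun v hv => ?_⟩
      have h1 : v ∉ P i := by simpa using hi (hdist v hv x hx)
      simp [hσ, h1]
  obtain ⟨k, hk⟩ := key
  intro v hv w hw
  rw [hk v hv, hk w hw]

end Miranda

/-! ### Powers of a one-dimensional compactum -/

section Ostrand

variable {Y : Type} [MetricSpace Y]

/-- A finite disjoint family of open sets of mesh less than `ε`. -/
def GoodFam (ε : ℝ) (A : Set (Set Y)) : Prop :=
  A.Finite ∧ (∀ S ∈ A, IsOpen S ∧ Small ε S) ∧ ∀ x, ∀ S ∈ A, ∀ T ∈ A, x ∈ S → x ∈ T → S = T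

variable [CompactSpace Y]

/-- Finitely many disjoint closed sets inside small open sets can be swollen to a good family. -/
lemma exists_goodFam {ε : ℝ} {κ : Type} [Finite κ] (F U : κ → Set Y) (hF : ∀ j, IsClosed (F j))
    (hU : ∀ j, IsOpen (U j)) (hs : ∀ j, Small ε (U j)) (hFU : ∀ j, F j ⊆ U j)
    (hd : ∀ x i j, x ∈ F i → x ∈ F j → i = j) :
    ∃ A : Set (Set Y), GoodFam ε A ∧ ∀ j, F j ⊆ ⋃₀ A := by
  obtain ⟨V, hV, hFV, hVU, hVd⟩ := swell_disjoint F U hF hU hFU hd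
  refine ⟨range V, ⟨finite_range V, ?_, ?_⟩, fun j x hx => ⟨V j, mem_range_self j, hFV j hx⟩⟩
  · rintro _ ⟨j, rfl⟩
    exact ⟨hV j, (hs j).mono (hVU j)⟩
  · rintro x _ ⟨i, rfl⟩ _ ⟨j, rfl⟩ hi hj
    rw [hVd x i j hi hj]

/-- A compactum of dimension at most one is covered by two disjoint families of small open sets. -/
lemma exists_goodFam_two (hdim : CovDimLE Y 1) {ε : ℝ} (hε : 0 < ε) :
    ∃ A B : Set (Set Y), GoodFam ε A ∧ GoodFam ε B ∧ ∀ x, x ∈ ⋃₀ A ∨ x ∈ ⋃₀ B := by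
  classical
  obtain ⟨t, ht⟩ := isCompact_univ.elim_finite_subcover (fun y : Y => Metric.ball y (ε / 2))
    (fun y => Metric.isOpen_ball)
    (fun y _ => mem_iUnion.2 ⟨y, Metric.mem_ball_self (half_pos hε)⟩)
  have hsmall : ∀ y : Y, Small ε (Metric.ball y (ε / 2)) := by
    intro y a ha b hb
    have := dist_triangle_right a b y
    rw [Metric.mem_ball] at ha hb
    linarith
  obtain ⟨κ, F, hκ, hFcl, hFcov, hFref, hFr⟩ := hasCov_of_covDimLE (Z := Y) (e := id)
    IsClosedEmbedding.id hdim (U := fun y : t => Metric.ball (y : Y) (ε / 2))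
    (fun y => Metric.isOpen_ball) (by
      intro x _
      obtain ⟨y, hy, hxy⟩ := mem_iUnion₂.1 (ht (mem_univ x))
      exact mem_iUnion.2 ⟨⟨y, hy⟩, hxy⟩)
  choose i hi using hFref
  have : Fintype κ := Fintype.ofFinite κ
  have hr : ∀ x, ∀ s : Finset κ, (∀ j ∈ s, x ∈ F j) → s.card ≤ 2 := by
    intro x s hs
    rw [← Set.ncard_coe_finset]
    exact ncard_le_of_imp (fun j hj => hs j hj) (hFr x)
  -- The first family comes from the pairwise intersections of the members of the cover, the
  -- second one from what is left of the members.
  have hne : ∀ s : {s : Finset κ // s.card = 2}, ∃ j, j ∈ s.1 := by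
    rintro ⟨s, hs⟩
    exact Finset.card_pos.1 (show 0 < s.card by omega)
  choose j hj using hne
  obtain ⟨A, hA, hFA⟩ := exists_goodFam (ε := ε)
    (κ := {s : Finset κ // s.card = 2}) (fun s => ⋂ k ∈ s.1, F k)
    (fun s => Metric.ball (i (j s)) (ε / 2)) (fun s => isClosed_biInter fun k _ => hFcl k)
    (fun s => Metric.isOpen_ball) (fun s => hsmall _)
    (fun s => (biInter_subset_of_mem (hj s)).trans (hi (j s)))
    (by
      rintro x ⟨s, hs⟩ ⟨t, ht⟩ hxs hxt
      simp only [mem_iInter] at hxs hxt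
      have hu := hr x (s ∪ t) (by
        intro k hk
        rcases Finset.mem_union.1 hk with h | h
        · exact hxs k h
        · exact hxt k h)
      have h1 : s = s ∪ t := Finset.eq_of_subset_of_card_le Finset.subset_union_left (by omega)
      have h2 : t = s ∪ t := Finset.eq_of_subset_of_card_le Finset.subset_union_right (by omega)
      exact Subtype.ext (h1.trans h2.symm))
  have hAo : IsOpen (⋃₀ A) := isOpen_sUnion fun S hS => (hA.2.1 S hS).1
  obtain ⟨B, hB, hFB⟩ := exists_goodFam (ε := ε) (fun k => F k \ ⋃₀ A)
    (fun k => Metric.ball (i k) (ε / 2)) (fun k => (hFcl k).sdiff hAo)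
    (fun k => Metric.isOpen_ball) (fun k => hsmall _)
    (fun k => sdiff_subset.trans (hi k))
    (by
      rintro x k l ⟨hk, hxA⟩ ⟨hl, _⟩
      by_contra hkl
      refine hxA (hFA ⟨{k, l}, Finset.card_pair hkl⟩ ?_)
      simp [hk, hl])
  refine ⟨A, B, hA, hB, fun x => ?_⟩
  obtain ⟨k, hk⟩ := mem_iUnion.1 (hFcov ⟨x, rfl⟩)
  by_cases hxA : x ∈ ⋃₀ A
  · exact Or.inl hxA
  · exact Or.inr (hFB k ⟨hk, hxA⟩)

/-- Ostrand's coloured covers: a compactum of dimension at most one has `k + 2` finite disjoint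
families of small open sets such that every point is missed by at most one
family. -/
lemma exists_colored (hdim : CovDimLE Y 1) {ε : ℝ} (hε : 0 < ε) (k : ℕ) :
    ∃ A : ℕ → Set (Set Y), (∀ c < k + 2, GoodFam ε (A c)) ∧
      ∀ x, ∀ c < k + 2, ∀ d < k + 2, c ≠ d → x ∈ ⋃₀ A c ∨ x ∈ ⋃₀ A d := by
  induction k with
  | zero =>
    obtain ⟨A, B, hA, hB, hAB⟩ := exists_goodFam_two hdim hε
    refine ⟨fun c => if c = 0 then A else B, ?_, ?_⟩
    · intro c _
      dsimp only
      split_ifs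
      exacts [hA, hB]
    · intro x c hc d hd hcd
      have : c = 0 ∧ d = 1 ∨ c = 1 ∧ d = 0 := by omega
      rcases this with ⟨rfl, rfl⟩ | ⟨rfl, rfl⟩
      · simpa using hAB x
      · simpa using (hAB x).symm
  | succ k ih =>
    obtain ⟨A, hA, hcov⟩ := ih
    have hAo : ∀ c < k + 2, IsOpen (⋃₀ A c) := fun c hc =>
      isOpen_sUnion fun S hS => ((hA c hc).2.1 S hS).1
    -- The set missed by the colour `c` is cut into small closed pieces by any other colour.
    let o : ℕ → ℕ := fun c => if c = 0 then 1 else 0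
    have ho : ∀ c, o c < k + 2 ∧ c ≠ o c := by
      intro c
      simp only [o]
      split_ifs <;> omega
    let κ := {p : Fin (k + 2) × Set Y // p.2 ∈ A (o p.1)}
    have hκ : Finite κ := by
      have : Finite {p : Fin (k + 2) × Set Y | p.2 ∈ A (o p.1)} := by
        have h1 : {p : Fin (k + 2) × Set Y | p.2 ∈ A (o p.1)} ⊆
            (univ : Set (Fin (k + 2))) ×ˢ ⋃ c : Fin (k + 2), A (o c) := by
          rintro ⟨c, S⟩ h
          exact ⟨mem_univ _, mem_iUnion.2 ⟨c, h⟩⟩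
        exact ((finite_univ.prod (finite_iUnion fun c : Fin (k + 2) => (hA _ (ho c).1).1)).subset h1).to_subtype
      exact this
    obtain ⟨B, hB, hFB⟩ := exists_goodFam (ε := ε) (κ := κ)
      (fun p => p.1.2 \ ⋃₀ A p.1.1) (fun p => p.1.2)
      (by
        rintro ⟨⟨c, S⟩, hS⟩
        have e : S \ ⋃₀ A c = (⋃₀ A c ∪ ⋃₀ (A (o c) \ {S}))ᶜ := by
          ext x
          constructor
          · rintro ⟨hxS, hx⟩ (h | ⟨T, ⟨hT, hTS⟩, hxT⟩)
            · exact hx h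
            · exact hTS ((hA _ (ho c).1).2.2 x T hT S hS hxT hxS)
          · intro hx
            have h1 : x ∉ ⋃₀ A c := fun h => hx (Or.inl h)
            refine ⟨?_, h1⟩
            obtain ⟨T, hT, hxT⟩ := (hcov x c c.2 (o c) (ho c).1 (ho c).2).resolve_left h1
            by_cases hTS : T = S
            · exact hTS ▸ hxT
            · exact absurd (Or.inr ⟨T, ⟨hT, hTS⟩, hxT⟩) hx
        change IsClosed (S \ ⋃₀ A c)
        rw [e]
        refine ((hAo c c.2).union (isOpen_sUnion fun T hT => ?_)).isClosed_compl
        exact ((hA _ (ho c).1).2.1 T hT.1).1)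
      (fun p => ((hA _ (ho _).1).2.1 _ p.2).1) (fun p => ((hA _ (ho _).1).2.1 _ p.2).2)
      (fun p => sdiff_subset)
      (by
        rintro x ⟨⟨c, S⟩, hS⟩ ⟨⟨d, T⟩, hT⟩ ⟨hxS, hxc⟩ ⟨hxT, hxd⟩
        dsimp only at hxS hxc hxT hxd hS hT
        have hcd : c = d := by
          by_contra hne
          exact (hcov x c c.2 d d.2 (fun h => hne (Fin.ext h))).elim hxc hxd
        subst hcd
        have hST := (hA _ (ho c).1).2.2 x S hS T hT hxS hxT
        subst hST
        rfl)
    have hnew : ∀ x, ∀ c < k + 2, x ∈ ⋃₀ A c ∨ x ∈ ⋃₀ B := by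
      intro x c hc
      by_cases hx : x ∈ ⋃₀ A c
      · exact Or.inl hx
      · obtain ⟨T, hT, hxT⟩ := (hcov x c hc (o c) (ho c).1 (ho c).2).resolve_left hx
        exact Or.inr (hFB ⟨(⟨c, hc⟩, T), hT⟩ ⟨hxT, hx⟩)
    refine ⟨Function.update A (k + 2) B, ?_, ?_⟩
    · intro c hc
      by_cases h : c = k + 2
      · subst h
        simpa using hB
      · rw [Function.update_of_ne h]
        exact hA c (by omega)
    · intro x c hc d hd hcd
      by_cases h : c = k + 2
      · subst h
        rw [Function.update_self, Function.update_of_ne hcd.symm]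
        exact (hnew x d (by omega)).symm
      · rw [Function.update_of_ne h]
        by_cases h' : d = k + 2
        · subst h'
          rw [Function.update_self]
          exact hnew x c (by omega)
        · rw [Function.update_of_ne h']
          exact hcov x c (by omega) d (by omega) hcd

/-- The `m`-th power of a compactum of dimension at most one has dimension at most `m`. The members
of the cover shrink products of `m` sets of one colour, where the colour varies over `m + 1`
colours. -/
lemma hasCov_pi (hdim : CovDimLE Y 1) {m : ℕ} (hm : 1 ≤ m) {ε : ℝ} (hε : 0 < ε) :
    HasCov (Small ε) (univ : Set (Fin m → Y)) (m + 1) := by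
  obtain ⟨k, rfl⟩ : ∃ k, m = k + 1 := ⟨m - 1, by omega⟩
  obtain ⟨A, hA, hcov⟩ := exists_colored hdim hε k
  have hfin : ∀ c : Fin (k + 2), Finite (A c) := fun c => (hA c c.2).1.to_subtype
  let κ := Σ c : Fin (k + 2), (Fin (k + 1) → A c)
  let V : κ → Set (Fin (k + 1) → Y) := fun p => {x | ∀ i, x i ∈ (p.2 i : Set Y)}
  have hV : ∀ p, IsOpen (V p) := by
    intro p
    have : V p = univ.pi fun i => (p.2 i : Set Y) := by
      ext x
      simp [V]
    rw [this]
    exact isOpen_set_pi finite_univ fun i _ => ((hA _ p.1.2).2.1 _ (p.2 i).2).1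
  have hVcov : ∀ x, ∃ p, x ∈ V p := by
    intro x
    -- Each of the `k + 1` coordinates excludes at most one of the `k + 2` colours.
    have : ∃ c : Fin (k + 2), ∀ i, x i ∈ ⋃₀ A c := by
      by_contra hcon
      push Not at hcon
      choose i hi using hcon
      obtain ⟨c, d, hcd, hcd'⟩ := Fintype.exists_ne_map_eq_of_card_lt i (by simp)
      have h1 := hi c
      rw [hcd'] at h1
      exact (hcov (x (i d)) c c.2 d d.2 (fun h => hcd (Fin.ext h))).elim h1 (hi d)
    obtain ⟨c, hc⟩ := this
    choose S hS hxS using hc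
    exact ⟨⟨c, fun i => ⟨S i, hS i⟩⟩, hxS⟩
  obtain ⟨F, hF, hFcl, hFV⟩ := exists_subset_iUnion_closed_subset
    (isClosed_univ (X := Fin (k + 1) → Y)) hV (fun x _ => Set.toFinite _)
    (fun x _ => mem_iUnion.2 (hVcov x))
  refine ⟨κ, F, inferInstance, hFcl, hF, fun p => ?_, fun x => ?_⟩
  · refine Small.mono (fun x hx y hy => ?_) (hFV p)
    rw [dist_pi_lt_iff hε]
    exact fun i => ((hA _ p.1.2).2.1 _ (p.2 i).2).2 _ (hx i) _ (hy i)
  · have : ({p | x ∈ F p}).ncard ≤ (univ : Set (Fin (k + 2))).ncard := by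
      refine Set.ncard_le_ncard_of_injOn Sigma.fst (fun p _ => mem_univ _) ?_ (Set.toFinite _)
      rintro ⟨c, S⟩ hS ⟨d, T⟩ hT hcd
      dsimp only at hcd
      subst hcd
      have h1 := hFV _ hS
      have h2 := hFV _ hT
      have : S = T := by
        funext i
        exact Subtype.ext ((hA _ c.2).2.2 (x i) _ (S i).2 _ (T i).2 (h1 i) (h2 i))
      rw [this]
    simpa [Set.ncard_univ] using this

end Ostrand

/-! ### Partitions satisfying countably many conditions -/

section Partition

variable {M : Type} [MetricSpace M]

/-- If each condition `C j` passes to subsets and can be forced on the complement of `P ∪ Q` by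
enlarging the disjoint closed sets `P` and `Q`, then there is a partition satisfying all of the
conditions simultaneously. -/
lemma exists_partition {C : ℕ → Set M → Prop} (hmono : ∀ j R S, R ⊆ S → C j S → C j R)
    (hstep : ∀ j P Q, IsClosed P → IsClosed Q → Disjoint P Q → ∃ P' Q', IsClosed P' ∧
      IsClosed Q' ∧ Disjoint P' Q' ∧ P ⊆ P' ∧ Q ⊆ Q' ∧ C j (P' ∪ Q')ᶜ)
    {A B : Set M} (hA : IsClosed A) (hB : IsClosed B) (hAB : Disjoint A B) :
    ∃ U V, IsOpen U ∧ IsOpen V ∧ Disjoint U V ∧ A ⊆ U ∧ B ⊆ V ∧ ∀ j, C j (U ∪ V)ᶜ := by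
  let St := {p : Set M × Set M // IsClosed p.1 ∧ IsClosed p.2 ∧ Disjoint p.1 p.2}
  have hnext : ∀ (j : ℕ) (p : St), ∃ q : St, p.1.1 ⊆ interior q.1.1 ∧ p.1.2 ⊆ interior q.1.2 ∧
      C j (q.1.1 ∪ q.1.2)ᶜ := by
    rintro j ⟨⟨P, Q⟩, hP, hQ, hPQ⟩
    dsimp only at hP hQ hPQ
    obtain ⟨v, hv, hPv, hvQ⟩ := normal_exists_closure_subset hP hQ.isOpen_compl
      hPQ.subset_compl_right
    obtain ⟨w, hw, hQw, hwv⟩ := normal_exists_closure_subset hQ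
      (isClosed_closure (s := v)).isOpen_compl (subset_compl_comm.1 hvQ)
    obtain ⟨P', Q', h1, h2, h3, h4, h5, h6⟩ := hstep j (closure v) (closure w) isClosed_closure
      isClosed_closure (disjoint_left.2 fun x hx hx' => hwv hx' hx)
    exact ⟨⟨(P', Q'), h1, h2, h3⟩, hPv.trans (hv.subset_interior_iff.2 (subset_closure.trans h4)),
      hQw.trans (hw.subset_interior_iff.2 (subset_closure.trans h5)), h6⟩
  choose next hn1 hn2 hn3 using hnext
  let s : ℕ → St := fun j => Nat.rec ⟨(A, B), hA, hB, hAB⟩ next j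
  have hs1 : ∀ j, (s j).1.1 ⊆ interior (s (j + 1)).1.1 := fun j => hn1 j (s j)
  have hs2 : ∀ j, (s j).1.2 ⊆ interior (s (j + 1)).1.2 := fun j => hn2 j (s j)
  have hm1 : Monotone fun j => (s j).1.1 :=
    monotone_nat_of_le_succ fun j => (hs1 j).trans interior_subset
  have hm2 : Monotone fun j => (s j).1.2 :=
    monotone_nat_of_le_succ fun j => (hs2 j).trans interior_subset
  refine ⟨⋃ j, interior (s j).1.1, ⋃ j, interior (s j).1.2, isOpen_iUnion fun j => isOpen_interior,
    isOpen_iUnion fun j => isOpen_interior, ?_, ?_, ?_, fun j => ?_⟩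
  · rw [disjoint_left]
    intro x hx hx'
    obtain ⟨i, hi⟩ := mem_iUnion.1 hx
    obtain ⟨j, hj⟩ := mem_iUnion.1 hx'
    exact disjoint_left.1 (s (max i j)).2.2.2 (hm1 (le_max_left i j) (interior_subset hi))
      (hm2 (le_max_right i j) (interior_subset hj))
  · exact (hs1 0).trans (subset_iUnion (fun j => interior (s j).1.1) 1)
  · exact (hs2 0).trans (subset_iUnion (fun j => interior (s j).1.2) 1)
  · refine hmono j _ _ (compl_subset_compl.2 (union_subset_union ?_ ?_)) (hn3 j (s j))
    · exact (hs1 (j + 1)).trans (subset_iUnion (fun j => interior (s j).1.1) (j + 2))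
    · exact (hs2 (j + 1)).trans (subset_iUnion (fun j => interior (s j).1.2) (j + 2))

/-- The set `R` is crooked with respect to `g`: there is a continuous function `f` such that, on `R`,
the region `g ≤ 0` lies below the level `f = 3/2` and the region `g ≥ 3` above the level `f = 7/2`,
while `g > 2` on the lower of these two levels and `g < 1` on the upper one. So, on the way
from the first region to the second one, `g` exceeds `2` before it returns below `1`. -/
def CrookCond (g : M → ℝ) (R : Set M) : Prop :=
  ∃ f : M → ℝ, Continuous f ∧ ∀ x ∈ R, (f x = 3 / 2 → 2 < g x) ∧ (f x = 7 / 2 → g x < 1) ∧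
    (g x ≤ 0 → f x < 3 / 2) ∧ (3 ≤ g x → 7 / 2 < f x)

lemma CrookCond.mono {g : M → ℝ} {R S : Set M} (h : R ⊆ S) (hS : CrookCond g S) :
    CrookCond g R := by
  obtain ⟨f, hf, h'⟩ := hS
  exact ⟨f, hf, fun x hx => h' x (h hx)⟩

/-- Crookedness can be forced by enlarging disjoint closed sets. -/
lemma crook_step {g : M → ℝ} (hg : Continuous g) {P Q : Set M} (hP : IsClosed P)
    (hQ : IsClosed Q) (hPQ : Disjoint P Q) : ∃ P' Q', IsClosed P' ∧ IsClosed Q' ∧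
      Disjoint P' Q' ∧ P ⊆ P' ∧ Q ⊆ Q' ∧ CrookCond g (P' ∪ Q')ᶜ := by
  obtain ⟨f, hf0, hf1, -⟩ := exists_continuous_zero_one_of_isClosed hP hQ hPQ
  obtain ⟨s, hs, hs0, hs1⟩ : ∃ s : M → ℝ, Continuous s ∧ (∀ x ∈ P, s x = -1) ∧
      ∀ x ∈ Q, s x = 6 := by
    refine ⟨fun x => 7 * f x - 1, by fun_prop, fun x hx => ?_, fun x hx => ?_⟩
    · simp [hf0 hx]
    · simp only [hf1 hx, Pi.one_apply]
      norm_num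
  have hle : ∀ c, IsClosed {x | s x ≤ c} := fun c => isClosed_le hs continuous_const
  have hge : ∀ c, IsClosed {x | c ≤ s x} := fun c => isClosed_le continuous_const hs
  have hle' : ∀ c, IsClosed {x | g x ≤ c} := fun c => isClosed_le hg continuous_const
  have hge' : ∀ c, IsClosed {x | c ≤ g x} := fun c => isClosed_le continuous_const hg
  -- The two sets are drawn in the `(s, g)`-plane, so that they interlock in the shape of an `S`.
  refine ⟨{x | s x ≤ 0} ∪ ({x | s x ≤ 4} ∩ {x | 3 ≤ g x}) ∪
      (({x | 3 ≤ s x} ∩ {x | s x ≤ 4}) ∩ {x | 1 ≤ g x}),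
    {x | 5 ≤ s x} ∪ ({x | 1 ≤ s x} ∩ {x | g x ≤ 0}) ∪
      (({x | 1 ≤ s x} ∩ {x | s x ≤ 2}) ∩ {x | g x ≤ 2}),
    ((hle 0).union ((hle 4).inter (hge' 3))).union (((hge 3).inter (hle 4)).inter (hge' 1)),
    ((hge 5).union ((hge 1).inter (hle' 0))).union (((hge 1).inter (hle 2)).inter (hle' 2)),
    ?_, ?_, ?_, s, hs, ?_⟩
  · rw [disjoint_left]
    rintro x ((h | ⟨h, h'⟩) | ⟨⟨h, h'⟩, h''⟩) ((k | ⟨k, k'⟩) | ⟨⟨k, k'⟩, k''⟩) <;>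
    · simp only [mem_ofPred_eq] at *
      linarith
  · intro x hx
    refine Or.inl (Or.inl ?_)
    have := hs0 x hx
    simp only [mem_ofPred_eq]
    linarith
  · intro x hx
    refine Or.inl (Or.inl ?_)
    have := hs1 x hx
    simp only [mem_ofPred_eq]
    linarith
  · intro x hx
    simp only [mem_compl_iff, mem_union, mem_inter_iff, mem_ofPred_eq, not_or, not_and, not_le]
      at hx
    obtain ⟨⟨⟨h1, h2⟩, h3⟩, ⟨h4, h5⟩, h6⟩ := hx
    refine ⟨fun h => h6 ⟨by linarith, by linarith⟩, fun h => h3 ⟨by linarith, by linarith⟩,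
      fun h => ?_, fun h => ?_⟩
    · by_contra hc
      have := h5 (by linarith)
      linarith
    · by_contra hc
      have := h2 (by linarith)
      linarith

variable [CompactSpace M]

/-- Enlarging disjoint closed sets `P` and `Q` suitably, one gets a complement with a fine cover of
order one less than that of the covers of the space. In such a cover of the space, `G` is the union
of the members meeting `P`, and `H` is the union of the others; the remaining set lies in a
small neighbourhood of `G ∩ H`, covered by swollen intersections of members of the first kind with `H`. -/
lemma dim_step {r : ℕ} (hM : ∀ ε > 0, HasCov (Small ε) (univ : Set M) (r + 1)) {ε : ℝ}
    (hε : 0 < ε) {P Q : Set M} (hP : IsClosed P) (hQ : IsClosed Q) (hPQ : Disjoint P Q) :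
    ∃ P' Q', IsClosed P' ∧ IsClosed Q' ∧ Disjoint P' Q' ∧ P ⊆ P' ∧ Q ⊆ Q' ∧
      HasCov (Small ε) (P' ∪ Q')ᶜ r := by
  obtain ⟨δ, hδ, hd⟩ := hPQ.exists_thickenings hP.isCompact hQ
  obtain ⟨κ, F, hκ, hF, hcov, hsm, hr⟩ := hM (min (ε / 2) δ) (lt_min (half_pos hε) hδ)
  let I : Set κ := {j | (F j ∩ P).Nonempty}
  let G : Set M := ⋃ j ∈ I, F j
  let H : Set M := ⋃ j ∈ Iᶜ, F j
  have hGcl : IsClosed G := (Set.toFinite I).isClosed_biUnion fun j _ => hF j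
  have hHcl : IsClosed H := (Set.toFinite Iᶜ).isClosed_biUnion fun j _ => hF j
  have hHP : Disjoint H P := by
    rw [disjoint_left]
    intro x hx hxP
    obtain ⟨j, hj, hxj⟩ := mem_iUnion₂.1 hx
    exact hj ⟨x, hxj, hxP⟩
  have hGQ : Disjoint G Q := by
    rw [disjoint_left]
    intro x hx hxQ
    obtain ⟨j, ⟨y, hyj, hyP⟩, hxj⟩ := mem_iUnion₂.1 hx
    refine disjoint_left.1 hd (Metric.mem_thickening_iff.2 ⟨y, hyP, ?_⟩)
      (Metric.self_subset_thickening hδ _ hxQ)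
    exact (hsm j x hxj y hyj).trans_le (min_le_right _ _)
  have hGH : ∀ x, x ∈ G ∨ x ∈ H := by
    intro x
    obtain ⟨j, hj⟩ := mem_iUnion.1 (hcov (mem_univ x))
    by_cases h : j ∈ I
    · exact Or.inl (mem_iUnion₂.2 ⟨j, h, hj⟩)
    · exact Or.inr (mem_iUnion₂.2 ⟨j, h, hj⟩)
  -- Intersecting with `H` costs every point at least one member of the cover.
  obtain ⟨V, C, hV, hC, hEV, hVC, hCU, hCr⟩ := swell_order (κ := I) (fun j => F j ∩ H)
    (fun j => Metric.thickening (ε / 4) (F j)) (fun j => (hF j).inter hHcl)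
    (fun j => Metric.isOpen_thickening)
    (fun j => inter_subset_left.trans (Metric.self_subset_thickening (by positivity) _)) (r := r)
    (by
      intro x
      by_cases hx : x ∈ H
      · obtain ⟨j, hj, hxj⟩ := mem_iUnion₂.1 hx
        have h1 : ({i : I | x ∈ F i ∩ H}).ncard ≤ ({i | x ∈ F i} \ {j}).ncard := by
          refine Set.ncard_le_ncard_of_injOn Subtype.val ?_ Subtype.val_injective.injOn
            (Set.toFinite _)
          rintro ⟨i, hi⟩ hxi
          refine ⟨hxi.1, ?_⟩
          rintro rfl
          exact hj hi
        have h2 := Set.ncard_sdiff_singleton_add_one (s := {i | x ∈ F i}) hxj (Set.toFinite _)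
        have h3 := hr x
        omega
      · have : {i : I | x ∈ F i ∩ H} = ∅ := by
          ext i
          simp [hx]
        rw [this, ncard_empty]
        exact Nat.zero_le _)
  have hO : IsOpen (⋃ j, V j) := isOpen_iUnion hV
  have hGHO : G ∩ H ⊆ ⋃ j, V j := by
    rintro x ⟨hxG, hxH⟩
    obtain ⟨j, hj, hxj⟩ := mem_iUnion₂.1 hxG
    exact mem_iUnion.2 ⟨⟨j, hj⟩, hEV ⟨j, hj⟩ ⟨hxj, hxH⟩⟩
  refine ⟨(G \ ⋃ j, V j) ∪ P, (H \ ⋃ j, V j) ∪ Q, (hGcl.sdiff hO).union hP,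
    (hHcl.sdiff hO).union hQ, ?_, subset_union_right, subset_union_right, I, C, inferInstance, hC,
    ?_, fun j => ?_, hCr⟩
  · rw [disjoint_left]
    rintro x (⟨hx, hx'⟩ | hx) (⟨hy, hy'⟩ | hy)
    · exact hx' (hGHO ⟨hx, hy⟩)
    · exact disjoint_left.1 hGQ hx hy
    · exact disjoint_left.1 hHP hy hx
    · exact disjoint_left.1 hPQ hx hy
  · intro x hx
    refine iUnion_mono hVC ?_
    by_contra hxO
    exact (hGH x).elim (fun h => hx (Or.inl (Or.inl ⟨h, hxO⟩)))
      (fun h => hx (Or.inr (Or.inl ⟨h, hxO⟩)))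
  · refine Small.mono (Small.thickening ?_) (hCU j)
    exact fun x hx y hy => (hsm j x hx y hy).trans_le (min_le_left _ _)

/-- Disjoint closed sets are separated by a partition which is crooked with respect to every
member of a dense sequence of functions, and whose dimension is smaller than that of the space. -/
lemma exists_crooked_partition {r : ℕ}
    (hM : ∀ ε > 0, HasCov (Small ε) (univ : Set M) (r + 1)) (g : ℕ → C(M, ℝ))
    {A B : Set M} (hA : IsClosed A) (hB : IsClosed B) (hAB : Disjoint A B) :
    ∃ U V, IsOpen U ∧ IsOpen V ∧ Disjoint U V ∧ A ⊆ U ∧ B ⊆ V ∧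
      (∀ j, CrookCond (g j) (U ∪ V)ᶜ) ∧ ∀ ε > 0, HasCov (Small ε) (U ∪ V)ᶜ r := by
  obtain ⟨U, V, h1, h2, h3, h4, h5, h6⟩ := exists_partition
    (C := fun j R => CrookCond (g j) R ∧ HasCov (Small (1 / ((j : ℝ) + 1))) R r)
    (fun j R S hRS h => ⟨h.1.mono hRS, h.2.mono_set hRS⟩)
    (by
      intro j P Q hP hQ hPQ
      obtain ⟨P₁, Q₁, a1, a2, a3, a4, a5, a6⟩ := crook_step (g j).continuous hP hQ hPQ
      obtain ⟨P₂, Q₂, b1, b2, b3, b4, b5, b6⟩ := dim_step hM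
        (Nat.one_div_pos_of_nat (α := ℝ) (n := j)) a1 a2 a3
      exact ⟨P₂, Q₂, b1, b2, b3, a4.trans b4, a5.trans b5,
        a6.mono (compl_subset_compl.2 (union_subset_union b4 b5)), b6⟩) hA hB hAB
  refine ⟨U, V, h1, h2, h3, h4, h5, fun j => (h6 j).1, fun ε hε => ?_⟩
  obtain ⟨j, hj⟩ := exists_nat_one_div_lt hε
  obtain ⟨κ, F, c1, c2, c3, c4, c5⟩ := (h6 j).2
  exact ⟨κ, F, c1, c2, c3, fun i x hx y hy => (c4 i x hx y hy).trans hj, c5⟩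

end Partition

/-! ### Crookedness implies hereditary indecomposability -/

section Crooked

variable {M : Type} [MetricSpace M] [CompactSpace M]

/-- Two subcontinua of a crooked set whose union is connected are nested. -/
lemma nested_of_crook {K : Set M} {g : ℕ → C(M, ℝ)} (hg : DenseRange g)
    (hK : ∀ j, CrookCond (g j) K) {E F : Set M} (hE : IsSubcontinuum E) (hF : IsSubcontinuum F)
    (hEK : E ⊆ K) (hFK : F ⊆ K) (hEF : IsPreconnected (E ∪ F)) : E ⊆ F ∨ F ⊆ E := by
  by_contra hcon
  rw [not_or, not_subset, not_subset] at hcon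
  obtain ⟨⟨c, hcE, hcF⟩, d, hdF, hdE⟩ := hcon
  have hc : 0 < Metric.infDist c F :=
    (hF.1.isClosed.notMem_iff_infDist_pos hF.2.nonempty).1 hcF
  have hd : 0 < Metric.infDist d E :=
    (hE.1.isClosed.notMem_iff_infDist_pos hE.2.nonempty).1 hdE
  have hcE' : Metric.infDist c E = 0 := Metric.infDist_zero_of_mem hcE
  have hdF' : Metric.infDist d F = 0 := Metric.infDist_zero_of_mem hdF
  -- A function with `g₀ ≤ 3/2` on `E`, `g₀ ≥ 3/2` on `F`, `g₀ c = -1` and `g₀ d = 4`.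
  let g₀ : C(M, ℝ) := ⟨fun x => 3 / 2 - 5 / 2 * (Metric.infDist x F / Metric.infDist c F) +
    5 / 2 * (Metric.infDist x E / Metric.infDist d E), by
      have h1 := Metric.continuous_infDist_pt F
      have h2 := Metric.continuous_infDist_pt E
      fun_prop⟩
  obtain ⟨j, hj⟩ := hg.exists_dist_lt g₀ (show (0 : ℝ) < 1 / 2 by norm_num)
  have happ : ∀ x, |g₀ x - g j x| < 1 / 2 := fun x => by
    have := ContinuousMap.dist_apply_le_dist (f := g₀) (g := g j) x
    rw [Real.dist_eq] at this
    linarith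
  have hE2 : ∀ x ∈ E, g j x ≤ 2 := by
    intro x hx
    have h1 := abs_lt.1 (happ x)
    have h2 : g₀ x = 3 / 2 - 5 / 2 * (Metric.infDist x F / Metric.infDist c F) +
      5 / 2 * (Metric.infDist x E / Metric.infDist d E) := rfl
    rw [Metric.infDist_zero_of_mem hx, zero_div] at h2
    have h3 : 0 ≤ Metric.infDist x F / Metric.infDist c F :=
      div_nonneg Metric.infDist_nonneg hc.le
    linarith [h1.1]
  have hF2 : ∀ x ∈ F, 1 ≤ g j x := by
    intro x hx
    have h1 := abs_lt.1 (happ x)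
    have h2 : g₀ x = 3 / 2 - 5 / 2 * (Metric.infDist x F / Metric.infDist c F) +
      5 / 2 * (Metric.infDist x E / Metric.infDist d E) := rfl
    rw [Metric.infDist_zero_of_mem hx, zero_div] at h2
    have h3 : 0 ≤ Metric.infDist x E / Metric.infDist d E :=
      div_nonneg Metric.infDist_nonneg hd.le
    linarith [h1.2]
  have hc2 : g j c ≤ 0 := by
    have h1 := abs_lt.1 (happ c)
    have h2 : g₀ c = 3 / 2 - 5 / 2 * (Metric.infDist c F / Metric.infDist c F) +
      5 / 2 * (Metric.infDist c E / Metric.infDist d E) := rfl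
    rw [hcE', zero_div, div_self hc.ne'] at h2
    linarith [h1.1]
  have hd2 : 3 ≤ g j d := by
    have h1 := abs_lt.1 (happ d)
    have h2 : g₀ d = 3 / 2 - 5 / 2 * (Metric.infDist d F / Metric.infDist c F) +
      5 / 2 * (Metric.infDist d E / Metric.infDist d E) := rfl
    rw [hdF', zero_div, div_self hd.ne'] at h2
    linarith [h1.2]
  obtain ⟨f, hf, hfK⟩ := hK j
  have hfc := (hfK c (hEK hcE)).2.2.1 hc2
  have hfd := (hfK d (hFK hdF)).2.2.2 hd2
  have hE3 : ∀ x ∈ E, f x < 3 / 2 := by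
    intro x hx
    by_contra h
    obtain ⟨y, hy, hfy⟩ := hE.2.isPreconnected.intermediate_value hcE hx hf.continuousOn
      ⟨hfc.le, not_lt.1 h⟩
    exact absurd ((hfK y (hEK hy)).1 hfy) (not_lt.2 (hE2 y hy))
  have hF3 : ∀ x ∈ F, 7 / 2 < f x := by
    intro x hx
    by_contra h
    obtain ⟨y, hy, hfy⟩ := hF.2.isPreconnected.intermediate_value hx hdF hf.continuousOn
      ⟨not_lt.1 h, hfd.le⟩
    exact absurd ((hfK y (hFK hy)).2.1 hfy) (not_lt.2 (hF2 y hy))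
  obtain ⟨y, hy, hfy⟩ := hEF.intermediate_value (Or.inl hcE) (Or.inr hdF) hf.continuousOn
    (show (5 / 2 : ℝ) ∈ Icc (f c) (f d) from ⟨by linarith, by linarith⟩)
  rcases hy with hy | hy
  · have := hE3 y hy
    linarith
  · have := hF3 y hy
    linarith

lemma hereditarilyIndecomposable_of_crook {X : Set M} {g : ℕ → C(M, ℝ)} (hg : DenseRange g)
    (hX : ∀ j, CrookCond (g j) X) : HereditarilyIndecomposable (↥X) := by
  rintro S hS ⟨A, B, hA, hB, -, -, hAS, hBS, rfl⟩
  have himg : ∀ T : Set X, IsSubcontinuum T → IsSubcontinuum (Subtype.val '' T : Set M) :=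
    fun T hT => ⟨hT.1.image continuous_subtype_val,
      hT.2.image _ continuous_subtype_val.continuousOn⟩
  have hsub : ∀ T : Set X, (Subtype.val '' T : Set M) ⊆ X := by
    rintro T _ ⟨x, _, rfl⟩
    exact x.2
  rcases nested_of_crook hg hX (himg A hA) (himg B hB) (hsub A) (hsub B)
    (by rw [← image_union]; exact (himg _ hS).2.isPreconnected) with h | h
  · exact hBS (union_eq_right.2 ((image_subset_image_iff Subtype.val_injective).1 h)).symm
  · exact hAS (union_eq_left.2 ((image_subset_image_iff Subtype.val_injective).1 h)).symm

end Crooked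

/-! ### Essential partitions have large dimension -/

section LowerBound

variable {Y : Type} [MetricSpace Y] [CompactSpace Y] [ConnectedSpace Y]

/-- A partition between two opposite faces of the power `Y ^ (n + 1)` has no closed cover of order
at most `n` whose members do not meet two opposite faces. -/
lemma lower_bound {a b : Y} (hab : a ≠ b) {n : ℕ} {ι : Type} (W : ι → Set (Fin (n + 1) → Y))
    (hW : ∀ i k, ∀ x ∈ W i, ∀ y ∈ W i, x k = a → y k ≠ b) {U V : Set (Fin (n + 1) → Y)}
    (hU : IsOpen U) (hV : IsOpen V) (hUV : Disjoint U V) (hA : ∀ x, x (Fin.last n) = a → x ∈ U)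
    (hB : ∀ x, x (Fin.last n) = b → x ∈ V) : ¬ HasCov (Refines W) (U ∪ V)ᶜ n := by
  rintro ⟨κ, F, hκ, hF, hcov, hFW, hr⟩
  have hopp : ∀ j k, ∀ x ∈ F j, ∀ y ∈ F j, x k = a → y k ≠ b := by
    intro j k x hx y hy
    obtain ⟨i, hi⟩ := hFW j
    exact hW i k x (hi hx) y (hi hy)
  -- The label of a member is the least `i < n` such that the member meets the face `x i = a`;
  -- the label is `n` if there is no such `i`.
  let meets : κ → ℕ → Prop := fun j i => ∃ x ∈ F j, ∃ h : i < n + 1, x ⟨i, h⟩ = a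
  let lab : κ → ℕ := fun j => sInf {i | i = n ∨ meets j i}
  have hlab : ∀ j, lab j = n ∨ meets j (lab j) := fun j =>
    Nat.sInf_mem (s := {i | i = n ∨ meets j i}) ⟨n, Or.inl rfl⟩
  have hlab_le : ∀ j, lab j ≤ n := fun j => Nat.sInf_le (Or.inl rfl)
  have hlab_min : ∀ j i, i < lab j → ¬ meets j i := fun j i hi h =>
    Nat.notMem_of_lt_sInf hi (Or.inr h)
  -- For `i < n`, the set `S i` contains the face `x i = a` and the members with label `i`, and the set
  -- `S' i` contains the face `x i = b` and the members with larger label; neither meets the opposite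
  -- face. So the points equidistant from these two sets form a separator in the direction `i`.
  let T : Fin (n + 1) → Set (Fin (n + 1) → Y) := fun i => ⋃ j ∈ {j | lab j = i}, F j
  let T' : Fin (n + 1) → Set (Fin (n + 1) → Y) := fun i => ⋃ j ∈ {j | (i : ℕ) < lab j}, F j
  let S : Fin (n + 1) → Set (Fin (n + 1) → Y) := fun i => T i ∪ {x | x i = a}
  let S' : Fin (n + 1) → Set (Fin (n + 1) → Y) := fun i => T' i ∪ {x | x i = b}
  have hScl : ∀ i, IsClosed (S i) := fun i =>
    ((Set.toFinite _).isClosed_biUnion fun j _ => hF j).union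
      (isClosed_eq (continuous_apply i) continuous_const)
  have hScl' : ∀ i, IsClosed (S' i) := fun i =>
    ((Set.toFinite _).isClosed_biUnion fun j _ => hF j).union
      (isClosed_eq (continuous_apply i) continuous_const)
  have hSne : ∀ i, (S i).Nonempty := fun i => ⟨fun _ => a, Or.inr rfl⟩
  have hSne' : ∀ i, (S' i).Nonempty := fun i => ⟨fun _ => b, Or.inr rfl⟩
  have hSa : ∀ i x, x i = a → x ∉ S' i := by
    rintro i x hx (h | h)
    · obtain ⟨j, hj, hxj⟩ := mem_iUnion₂.1 h
      exact hlab_min j i hj ⟨x, hxj, i.2, hx⟩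
    · exact hab (hx.symm.trans h)
  have hSb : ∀ i x, i ≠ Fin.last n → x i = b → x ∉ S i := by
    rintro i x hi hx (h | h)
    · obtain ⟨j, hj, hxj⟩ := mem_iUnion₂.1 h
      have hj' : lab j = i := hj
      rcases hlab j with h1 | ⟨y, hy, h2, h3⟩
      · exact hi (Fin.ext (hj'.symm.trans h1))
      · have : (⟨lab j, h2⟩ : Fin (n + 1)) = i := Fin.ext hj'
        rw [this] at h3
        exact hopp j i y hy x hxj h3 hx
    · exact hab (h.symm.trans hx)
  classical
  let P : Fin (n + 1) → Set (Fin (n + 1) → Y) := fun i =>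
    if i = Fin.last n then Vᶜ else {x | Metric.infDist x (S i) ≤ Metric.infDist x (S' i)}
  let Q : Fin (n + 1) → Set (Fin (n + 1) → Y) := fun i =>
    if i = Fin.last n then Uᶜ else {x | Metric.infDist x (S' i) ≤ Metric.infDist x (S i)}
  obtain ⟨x, hx⟩ := miranda a b (n + 1) P Q
    (by
      intro i
      simp only [P]
      split_ifs
      · exact hV.isClosed_compl
      · exact isClosed_le (Metric.continuous_infDist_pt _) (Metric.continuous_infDist_pt _))
    (by
      intro i
      simp only [Q]
      split_ifs
      · exact hU.isClosed_compl
      · exact isClosed_le (Metric.continuous_infDist_pt _) (Metric.continuous_infDist_pt _))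
    (by
      intro i
      refine eq_univ_of_forall fun x => ?_
      simp only [P, Q]
      split_ifs
      · by_cases h : x ∈ V
        · exact Or.inr fun h' => disjoint_left.1 hUV h' h
        · exact Or.inl h
      · exact le_total (Metric.infDist x (S i)) (Metric.infDist x (S' i)))
    (by
      intro i x hxi
      simp only [Q]
      split_ifs with h
      · subst h
        exact fun hx => hx (hA x hxi)
      · intro hx
        have h1 := ((hScl' i).notMem_iff_infDist_pos (hSne' i)).1 (hSa i x hxi)
        have h2 : Metric.infDist x (S i) = 0 := Metric.infDist_zero_of_mem (Or.inr hxi)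
        have h3 : Metric.infDist x (S' i) ≤ Metric.infDist x (S i) := hx
        linarith)
    (by
      intro i x hxi
      simp only [P]
      split_ifs with h
      · subst h
        exact fun hx => hx (hB x hxi)
      · intro hx
        have h1 := ((hScl i).notMem_iff_infDist_pos (hSne i)).1 (hSb i x h hxi)
        have h2 : Metric.infDist x (S' i) = 0 := Metric.infDist_zero_of_mem (Or.inr hxi)
        have h3 : Metric.infDist x (S i) ≤ Metric.infDist x (S' i) := hx
        linarith)
  -- A point of the partition that lies in a member with label at least `i < n` lies in members
  -- with label `i` and with label greater than `i`.
  have hstep : ∀ i : Fin (n + 1), i ≠ Fin.last n → (∃ j, (i : ℕ) ≤ lab j ∧ x ∈ F j) →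
      x ∈ T i ∧ x ∈ T' i := by
    rintro i hi ⟨j, hij, hxj⟩
    have h1 : Metric.infDist x (S i) ≤ Metric.infDist x (S' i) := by
      have := (hx i).1
      simp only [P, if_neg hi] at this
      exact this
    have h2 : Metric.infDist x (S' i) ≤ Metric.infDist x (S i) := by
      have := (hx i).2
      simp only [Q, if_neg hi] at this
      exact this
    have h3 : x ∈ S i ∧ x ∈ S' i := by
      rw [(hScl i).mem_iff_infDist_zero (hSne i), (hScl' i).mem_iff_infDist_zero (hSne' i)]
      have p1 : 0 ≤ Metric.infDist x (S i) := Metric.infDist_nonneg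
      have p2 : 0 ≤ Metric.infDist x (S' i) := Metric.infDist_nonneg
      rcases hij.eq_or_lt with h | h
      · have : Metric.infDist x (S i) = 0 :=
          Metric.infDist_zero_of_mem (Or.inl (mem_iUnion₂.2 ⟨j, h.symm, hxj⟩))
        exact ⟨this, by linarith⟩
      · have : Metric.infDist x (S' i) = 0 :=
          Metric.infDist_zero_of_mem (Or.inl (mem_iUnion₂.2 ⟨j, h, hxj⟩))
        exact ⟨by linarith, this⟩
    exact ⟨h3.1.resolve_right fun h => hSa i x h h3.2,
      h3.2.resolve_right fun h => hSb i x hi h h3.1⟩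
  have hxK : x ∈ (U ∪ V)ᶜ := by
    have := hx (Fin.last n)
    simp only [P, Q, if_true] at this
    exact fun h => h.elim this.2 this.1
  have hge : ∀ i, i ≤ n → ∃ j, i ≤ lab j ∧ x ∈ F j := by
    intro i
    induction i with
    | zero =>
      intro _
      obtain ⟨j, hj⟩ := mem_iUnion.1 (hcov hxK)
      exact ⟨j, Nat.zero_le _, hj⟩
    | succ i ih =>
      intro hi
      obtain ⟨j, hj, hxj⟩ := mem_iUnion₂.1 (hstep ⟨i, by omega⟩
        (fun h => by have := congrArg Fin.val h; simp at this; omega) (ih (by omega))).2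
      exact ⟨j, hj, hxj⟩
  have hall : ∀ i : Fin (n + 1), ∃ j, lab j = i ∧ x ∈ F j := by
    intro i
    by_cases hi : i = Fin.last n
    · obtain ⟨j, hj, hxj⟩ := hge n le_rfl
      refine ⟨j, ?_, hxj⟩
      rw [hi, Fin.val_last]
      exact le_antisymm (hlab_le j) hj
    · obtain ⟨j, hj, hxj⟩ := mem_iUnion₂.1 (hstep i hi (hge i (by omega))).1
      exact ⟨j, hj, hxj⟩
  choose j hj hxj using hall
  have hcard : (univ : Set (Fin (n + 1))).ncard ≤ {j | x ∈ F j}.ncard := by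
    refine Set.ncard_le_ncard_of_injOn j (fun i _ => hxj i) ?_ (Set.toFinite _)
    intro i _ i' _ h
    exact Fin.ext (by rw [← hj i, ← hj i', h])
  have := hr x
  rw [Set.ncard_univ, Nat.card_fin] at hcard
  omega

end LowerBound

/-! ### Cantor manifolds -/

section CantorManifold

variable {M : Type} [MetricSpace M] [CompactSpace M]

/-- Covers of order at most `r + 1` of two closed sets can be merged into one, when the
intersection of the two sets has arbitrarily fine covers of order at most `r`. -/
lemma merge {ι : Type} {W : ι → Set M} (hW : ∀ i, IsOpen (W i)) {X₁ X₂ : Set M}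
    (hX₁ : IsClosed X₁) (hX₂ : IsClosed X₂) {r : ℕ} (c₁ : HasCov (Refines W) X₁ (r + 1))
    (c₂ : HasCov (Refines W) X₂ (r + 1))
    (hL : ∀ (ι' : Type) (V : ι' → Set M), Finite ι' → (∀ i, IsOpen (V i)) →
      X₁ ∩ X₂ ⊆ ⋃ i, V i → HasCov (Refines V) (X₁ ∩ X₂) r) :
    HasCov (Refines W) (X₁ ∪ X₂) (r + 1) := by
  obtain ⟨κ₁, F₁, hκ₁, hF₁, hcov₁, href₁, hr₁⟩ := c₁
  obtain ⟨κ₂, F₂, hκ₂, hF₂, hcov₂, href₂, hr₂⟩ := c₂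
  choose i₁ hi₁ using href₁
  choose i₂ hi₂ using href₂
  obtain ⟨V₁, C₁, hV₁, hC₁, hFV₁, hVC₁, hCW₁, hCr₁⟩ := swell_order F₁ (fun j => W (i₁ j)) hF₁
    (fun j => hW _) hi₁ hr₁
  obtain ⟨V₂, C₂, hV₂, hC₂, hFV₂, hVC₂, hCW₂, hCr₂⟩ := swell_order F₂ (fun j => W (i₂ j)) hF₂
    (fun j => hW _) hi₂ hr₂
  obtain ⟨κ, F, hκ, hF, hcov, href, hr⟩ := hL (κ₁ × κ₂) (fun p => V₁ p.1 ∩ V₂ p.2) inferInstance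
    (fun p => (hV₁ _).inter (hV₂ _)) (by
      rintro x ⟨h1, h2⟩
      obtain ⟨j, hj⟩ := mem_iUnion.1 (hcov₁ h1)
      obtain ⟨k, hk⟩ := mem_iUnion.1 (hcov₂ h2)
      exact mem_iUnion.2 ⟨(j, k), hFV₁ j hj, hFV₂ k hk⟩)
  choose p hp using href
  obtain ⟨V, C, hV, hC, hFV, hVC, hCW, hCr⟩ := swell_order F (fun j => V₁ (p j).1 ∩ V₂ (p j).2) hF
    (fun j => (hV₁ _).inter (hV₂ _)) hp hr
  have hO : IsOpen (⋃ j, V j) := isOpen_iUnion hV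
  obtain ⟨ρ, hρ0, hρ1, hρ⟩ := exists_continuous_zero_one_of_isClosed (hX₁.sdiff hO)
    (hX₂.sdiff hO) (by
      rw [disjoint_left]
      rintro x ⟨h1, h⟩ ⟨h2, -⟩
      exact h (iUnion_mono hFV (hcov ⟨h1, h2⟩)))
  -- Distinct levels `t j` for the members of the cover of the intersection: each member is cut
  -- along its own level of `ρ`, and the two halves are handed over to the two covers.
  obtain ⟨e, he⟩ := exists_injective_nat κ
  let t : κ → ℝ := fun j => 1 / ((e j : ℝ) + 2)
  have ht0 : ∀ j, 0 < t j := fun j => by positivity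
  have ht1 : ∀ j, t j < 1 := fun j => by
    have : (0 : ℝ) ≤ e j := Nat.cast_nonneg _
    rw [div_lt_one (by positivity)]
    linarith
  have htinj : ∀ j k, t j = t k → j = k := by
    intro j k h
    have h1 : (0 : ℝ) ≤ e j := Nat.cast_nonneg _
    have h2 : (0 : ℝ) ≤ e k := Nat.cast_nonneg _
    have h3 : (e j : ℝ) + 2 = e k + 2 := by
      have := one_div_one_div ((e j : ℝ) + 2)
      rw [← this, ← one_div_one_div ((e k : ℝ) + 2)]
      exact congrArg (fun z => 1 / z) h
    exact he (by exact_mod_cast add_right_cancel h3)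
  have hle : ∀ c, IsClosed {x | ρ x ≤ c} := fun c => isClosed_le ρ.continuous continuous_const
  have hge : ∀ c, IsClosed {x | c ≤ ρ x} := fun c => isClosed_le continuous_const ρ.continuous
  let D : κ₁ ⊕ κ₂ → Set M := Sum.elim
    (fun k => (C₁ k ∩ {x | ρ x ≤ 0}) ∪ ⋃ j ∈ {j | (p j).1 = k}, C j ∩ {x | ρ x ≤ t j})
    (fun k => (C₂ k ∩ {x | 1 ≤ ρ x}) ∪ ⋃ j ∈ {j | (p j).2 = k}, C j ∩ {x | t j ≤ ρ x})
  have hl : ∀ k x, x ∈ D (Sum.inl k) ↔ (x ∈ C₁ k ∧ ρ x ≤ 0) ∨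
      ∃ j, (p j).1 = k ∧ x ∈ C j ∧ ρ x ≤ t j := by
    intro k x
    simp [D, and_left_comm]
  have hrr : ∀ k x, x ∈ D (Sum.inr k) ↔ (x ∈ C₂ k ∧ 1 ≤ ρ x) ∨
      ∃ j, (p j).2 = k ∧ x ∈ C j ∧ t j ≤ ρ x := by
    intro k x
    simp [D, and_left_comm]
  have hlC : ∀ k, D (Sum.inl k) ⊆ C₁ k := by
    intro k x hx
    rcases (hl k x).1 hx with ⟨h, -⟩ | ⟨j, rfl, h, -⟩
    · exact h
    · exact hVC₁ _ (hCW j h).1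
  have hrC : ∀ k, D (Sum.inr k) ⊆ C₂ k := by
    intro k x hx
    rcases (hrr k x).1 hx with ⟨h, -⟩ | ⟨j, rfl, h, -⟩
    · exact h
    · exact hVC₂ _ (hCW j h).2
  refine ⟨κ₁ ⊕ κ₂, D, inferInstance, ?_, ?_, ?_, fun x => ?_⟩
  · rintro (k | k)
    · exact ((hC₁ k).inter (hle 0)).union
        ((Set.toFinite _).isClosed_biUnion fun j _ => (hC j).inter (hle _))
    · exact ((hC₂ k).inter (hge 1)).union
        ((Set.toFinite _).isClosed_biUnion fun j _ => (hC j).inter (hge _))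
  · intro x hx
    by_cases hxO : x ∈ ⋃ j, V j
    · obtain ⟨j, hj⟩ := mem_iUnion.1 hxO
      rcases le_total (ρ x) (t j) with h | h
      · exact mem_iUnion.2 ⟨Sum.inl (p j).1, (hl _ _).2 (Or.inr ⟨j, rfl, hVC j hj, h⟩)⟩
      · exact mem_iUnion.2 ⟨Sum.inr (p j).2, (hrr _ _).2 (Or.inr ⟨j, rfl, hVC j hj, h⟩)⟩
    · rcases hx with hx | hx
      · obtain ⟨k, hk⟩ := mem_iUnion.1 (hcov₁ hx)
        exact mem_iUnion.2 ⟨Sum.inl k, (hl _ _).2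
          (Or.inl ⟨hVC₁ k (hFV₁ k hk), (hρ0 ⟨hx, hxO⟩).le⟩)⟩
      · obtain ⟨k, hk⟩ := mem_iUnion.1 (hcov₂ hx)
        exact mem_iUnion.2 ⟨Sum.inr k, (hrr _ _).2
          (Or.inl ⟨hVC₂ k (hFV₂ k hk), (hρ1 ⟨hx, hxO⟩).ge⟩)⟩
  · rintro (k | k)
    · exact ⟨i₁ k, (hlC k).trans (hCW₁ k)⟩
    · exact ⟨i₂ k, (hrC k).trans (hCW₂ k)⟩
  · rcases (hρ x).1.eq_or_lt with h0 | h0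
    · have hsub : {k | x ∈ D k} ⊆ Sum.inl '' {k | x ∈ C₁ k} := by
        rintro (k | k) hk
        · exact ⟨k, hlC k hk, rfl⟩
        · rcases (hrr k x).1 hk with ⟨-, h⟩ | ⟨j, -, -, h⟩
          · linarith
          · linarith [ht0 j]
      refine ncard_le_of_imp hsub ?_
      rw [ncard_image_of_injective _ Sum.inl_injective]
      exact hCr₁ x
    · rcases (hρ x).2.eq_or_lt with h1 | h1
      · have hsub : {k | x ∈ D k} ⊆ Sum.inr '' {k | x ∈ C₂ k} := by
          rintro (k | k) hk
          · rcases (hl k x).1 hk with ⟨-, h⟩ | ⟨j, -, -, h⟩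
            · linarith
            · linarith [ht1 j]
          · exact ⟨k, hrC k hk, rfl⟩
        refine ncard_le_of_imp hsub ?_
        rw [ncard_image_of_injective _ Sum.inr_injective]
        exact hCr₂ x
      · let A : Set κ := {j | x ∈ C j ∧ ρ x ≤ t j}
        let B : Set κ := {j | x ∈ C j ∧ t j ≤ ρ x}
        have hsub : {k | x ∈ D k} ⊆
            (fun j => Sum.inl (p j).1) '' A ∪ (fun j => Sum.inr (p j).2) '' B := by
          rintro (k | k) hk
          · rcases (hl k x).1 hk with ⟨-, h⟩ | ⟨j, rfl, h⟩
            · linarith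
            · exact Or.inl ⟨j, h, rfl⟩
          · rcases (hrr k x).1 hk with ⟨-, h⟩ | ⟨j, rfl, h⟩
            · linarith
            · exact Or.inr ⟨j, h, rfl⟩
        refine ncard_le_of_imp hsub ((ncard_union_le _ _).trans ?_)
        have hA := ncard_image_le (f := fun j => (Sum.inl (p j).1 : κ₁ ⊕ κ₂)) (Set.toFinite A)
        have hB := ncard_image_le (f := fun j => (Sum.inr (p j).2 : κ₁ ⊕ κ₂)) (Set.toFinite B)
        have hAB := ncard_union_add_ncard_inter A B
        have hU : (A ∪ B).ncard ≤ r :=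
          ncard_le_of_imp (fun j hj => hj.elim And.left And.left) (hCr x)
        -- Only a member whose level is exactly `ρ x` is counted twice.
        have hI : (A ∩ B).ncard ≤ 1 := by
          rw [ncard_le_one]
          intro j hj k hk
          exact htinj j k ((le_antisymm hj.2.2 hj.1.2).trans (le_antisymm hk.1.2 hk.2.2))
        omega

/-- By compactness, a closed set without a cover of order at most `n` refining `W` contains a
minimal such set. -/
lemma exists_minimal {ι : Type} {W : ι → Set M} (hW : ∀ i, IsOpen (W i)) {K : Set M}
    (hK : IsClosed K) {n : ℕ} (hn : ¬ HasCov (Refines W) K n) :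
    ∃ X ⊆ K, IsClosed X ∧ ¬ HasCov (Refines W) X n ∧
      ∀ Z ⊆ X, IsClosed Z → Z ≠ X → HasCov (Refines W) Z n := by
  obtain ⟨X, hXK, hX, hmin⟩ := zorn_superset_nonempty
    {Z : Set M | IsClosed Z ∧ ¬ HasCov (Refines W) Z n} (by
      intro c hc hchain hne
      refine ⟨⋂₀ c, ⟨isClosed_sInter fun s hs => (hc hs).1, fun hcov => ?_⟩,
        fun s hs => sInter_subset_of_mem hs⟩
      obtain ⟨O, hO, hcO, hOcov⟩ := hcov.exists_open hW
      have : Nonempty c := hne.to_subtype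
      obtain ⟨s, hs⟩ := exists_subset_nhds_of_isCompact' (V := fun s : c => (s : Set M)) (U := O)
        (fun a b => (hchain.total a.2 b.2).elim (fun h => ⟨a, subset_rfl, h⟩)
          fun h => ⟨b, h, subset_rfl⟩)
        (fun s => (hc s.2).1.isCompact) (fun s => (hc s.2).1)
        (fun x hx => hO.mem_nhds (hcO (by rwa [sInter_eq_iInter])))
      exact (hc s.2).2 (hOcov.mono_set hs)) K ⟨hK, hn⟩
  refine ⟨X, hXK, hX.1, hX.2, fun Z hZX hZ hne => ?_⟩
  by_contra hcon
  exact hne (hZX.antisymm (hmin ⟨hZ, hcon⟩ hZX))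

/-- A minimal closed set without a cover of order at most `r + 1` refining `W` is not disconnected
by a closed subset with arbitrarily fine covers of order at most `r`. -/
lemma isConnected_diff {ι : Type} [Finite ι] {W : ι → Set M} (hW : ∀ i, IsOpen (W i)) {X : Set M}
    (hX : IsClosed X) (hXW : X ⊆ ⋃ i, W i) {r : ℕ} (hn : ¬ HasCov (Refines W) X (r + 1))
    (hmin : ∀ Z ⊆ X, IsClosed Z → Z ≠ X → HasCov (Refines W) Z (r + 1)) {L : Set M}
    (hL : IsClosed L) (hLX : L ⊆ X)
    (hLcov : ∀ (ι' : Type) (V : ι' → Set M), Finite ι' → (∀ i, IsOpen (V i)) →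
      L ⊆ ⋃ i, V i → HasCov (Refines V) L r) : IsConnected (X \ L) := by
  constructor
  · rw [nonempty_iff_ne_empty]
    intro h
    have hXL : X = L := (sdiff_eq_empty.1 h).antisymm hLX
    obtain ⟨κ, F, h1, h2, h3, h4, h5⟩ := hLcov ι W inferInstance hW (hLX.trans hXW)
    exact hn ⟨κ, F, h1, h2, hXL ▸ h3, h4, fun x => (h5 x).trans (Nat.le_succ r)⟩
  · rw [isPreconnected_iff_subset_of_disjoint]
    intro u v hu hv huv hdis
    by_contra hcon
    rw [not_or] at hcon
    have hX₁ : IsClosed (L ∪ X \ v) := hL.union (hX.sdiff hv)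
    have hX₂ : IsClosed (L ∪ X \ u) := hL.union (hX.sdiff hu)
    have hint : (L ∪ X \ v) ∩ (L ∪ X \ u) = L := by
      refine subset_antisymm ?_ (subset_inter subset_union_left subset_union_left)
      rintro x ⟨h1 | h1, h2 | h2⟩
      · exact h1
      · exact h1
      · exact h2
      · by_contra hx
        exact (huv ⟨h1.1, hx⟩).elim h2.2 h1.2
    have hun : (L ∪ X \ v) ∪ (L ∪ X \ u) = X := by
      refine subset_antisymm (union_subset (union_subset hLX sdiff_subset)
        (union_subset hLX sdiff_subset)) fun x hx => ?_
      by_cases hxL : x ∈ L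
      · exact Or.inl (Or.inl hxL)
      · by_cases hxv : x ∈ v
        · refine Or.inr (Or.inr ⟨hx, fun hxu => ?_⟩)
          exact (eq_empty_iff_forall_notMem.1 hdis) x ⟨⟨hx, hxL⟩, hxu, hxv⟩
        · exact Or.inl (Or.inr ⟨hx, hxv⟩)
    have c₁ : HasCov (Refines W) (L ∪ X \ v) (r + 1) := by
      refine hmin _ (union_subset hLX sdiff_subset) hX₁ fun h => hcon.1 ?_
      rintro x ⟨hx, hxL⟩
      have hx' : x ∈ L ∪ X \ v := by rwa [h]
      exact (huv ⟨hx, hxL⟩).resolve_right (hx'.resolve_left hxL).2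
    have c₂ : HasCov (Refines W) (L ∪ X \ u) (r + 1) := by
      refine hmin _ (union_subset hLX sdiff_subset) hX₂ fun h => hcon.2 ?_
      rintro x ⟨hx, hxL⟩
      have hx' : x ∈ L ∪ X \ u := by rwa [h]
      exact (huv ⟨hx, hxL⟩).resolve_left (hx'.resolve_left hxL).2
    refine hn (hun ▸ merge hW hX₁ hX₂ c₁ c₂ ?_)
    rw [hint]
    exact hLcov

end CantorManifold

/-! ### Construction inside a power of a one-dimensional continuum -/

/-- A power of a one-dimensional continuum with `n + 1` factors contains a hereditarily
indecomposable Cantor manifold of dimension `n`. -/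
theorem exists_cantorManifold {Y : Type} [MetricSpace Y] [CompactSpace Y] [ConnectedSpace Y]
    [Nontrivial Y] (hdim : CovDimLE Y 1) {n : ℕ} (hn : 1 ≤ n) :
    ∃ X : Set (Fin (n + 1) → Y), IsContinuum (↥X) ∧ HereditarilyIndecomposable (↥X) ∧
      IsCantorManifold (↥X) n := by
  obtain ⟨r, rfl⟩ : ∃ r, n = r + 1 := ⟨n - 1, by omega⟩
  obtain ⟨a, b, hab⟩ := exists_pair_ne Y
  let M := Fin (r + 1 + 1) → Y
  -- A finite cover of the power by balls, none of which meets two opposite faces.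
  have hε : 0 < dist a b / 2 := half_pos (dist_pos.2 hab)
  obtain ⟨s, hs⟩ := isCompact_univ.elim_finite_subcover (fun y : M => Metric.ball y (dist a b / 2))
    (fun y => Metric.isOpen_ball) (fun y _ => mem_iUnion.2 ⟨y, Metric.mem_ball_self hε⟩)
  let W : s → Set M := fun y => Metric.ball y (dist a b / 2)
  have hWo : ∀ i, IsOpen (W i) := fun i => Metric.isOpen_ball
  have hWcov : ∀ Z : Set M, Z ⊆ ⋃ i, W i := by
    intro Z x _
    obtain ⟨y, hy, hxy⟩ := mem_iUnion₂.1 (hs (mem_univ x))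
    exact mem_iUnion.2 ⟨⟨y, hy⟩, hxy⟩
  have hW : ∀ i k, ∀ x ∈ W i, ∀ y ∈ W i, x k = a → y k ≠ b := by
    rintro i k x hx y hy rfl rfl
    have h1 := dist_triangle_right x y i
    have h2 := dist_le_pi_dist x y k
    have h3 : dist x i < dist (x k) (y k) / 2 := hx
    have h4 : dist y i < dist (x k) (y k) / 2 := hy
    linarith
  let g : ℕ → C(M, ℝ) := denseSeq C(M, ℝ)
  have hg : DenseRange g := denseRange_denseSeq _
  obtain ⟨U, V, hU, hV, hUV, hA, hB, hcrook, hsmall⟩ := exists_crooked_partition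
    (M := M) (r := r + 1 + 1) (fun ε hε => hasCov_pi hdim (by omega) hε) g
    (A := {x | x (Fin.last (r + 1)) = a}) (B := {x | x (Fin.last (r + 1)) = b})
    (isClosed_eq (continuous_apply _) continuous_const)
    (isClosed_eq (continuous_apply _) continuous_const)
    (disjoint_left.2 fun x h1 h2 => hab (Eq.trans (Eq.symm h1) h2))
  have hK : ¬ HasCov (Refines W) (U ∪ V)ᶜ (r + 1) := lower_bound hab W hW hU hV hUV
    (fun x hx => hA hx) (fun x hx => hB hx)
  obtain ⟨X, hXK, hX, hXn, hmin⟩ := exists_minimal hWo (hU.union hV).isClosed_compl hK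
  have hcomp : CompactSpace X := isCompact_iff_compactSpace.1 hX.isCompact
  have hemb : IsClosedEmbedding (Subtype.val : X → M) := hX.isClosedEmbedding_subtypeVal
  have hconn : ∀ L : Set X, IsClosed L →
      (∀ (ι' : Type) (V : ι' → Set M), Finite ι' → (∀ i, IsOpen (V i)) →
        Subtype.val '' L ⊆ ⋃ i, V i → HasCov (Refines V) (Subtype.val '' L) r) →
      IsConnected (Lᶜ : Set X) := by
    intro L hL hLcov
    have h1 := isConnected_diff hWo hX (hWcov X) hXn hmin (hemb.isClosedMap _ hL)
      (by rintro _ ⟨x, _, rfl⟩; exact x.2) hLcov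
    have h2 : X \ Subtype.val '' L = Subtype.val '' (Lᶜ : Set X) := by
      rw [image_compl_eq_range_sdiff_image Subtype.val_injective, Subtype.range_val]
    rw [h2] at h1
    exact ⟨h1.nonempty.of_image, hemb.isInducing.isPreconnected_image.1 h1.isPreconnected⟩
  have huniv : IsConnected (univ : Set X) := by
    rw [← compl_empty]
    refine hconn ∅ isClosed_empty fun ι' V _ _ _ => ?_
    rw [image_empty]
    exact hasCov_empty _ _
  have hcs : ConnectedSpace X := connectedSpace_iff_univ.2 huniv
  refine ⟨X, ⟨hcs.toNonempty, hcomp, hcs, inferInstance⟩,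
    hereditarilyIndecomposable_of_crook hg fun j => (hcrook j).mono hXK,
    hcomp, inferInstance, ⟨?_, ?_⟩, fun L hL hdimL => hconn L hL fun ι' V hι' hV' hcov => ?_⟩
  · exact covDimLE_of_hasCov fun ι' V _ hV' hcov =>
      hasCov_of_small hX (fun ε hε => (hsmall ε hε).mono_set hXK) ι' V hV' hcov
  · rintro (⟨-, h⟩ | ⟨h, -⟩)
    · have h1 := hasCov_of_covDimLE hemb h hWo (hWcov _)
      have h2 : (((r + 1 : ℕ) : ℤ) - 1).toNat + 1 = r + 1 := by omega
      rw [h2, Subtype.range_val] at h1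
      exact hXn h1
    · omega
  · have hemb' : IsClosedEmbedding (fun x : L => (x : X).1) :=
      hemb.comp hL.isClosedEmbedding_subtypeVal
    have hrange : range (fun x : L => (x : X).1) = Subtype.val '' L := by
      rw [image_eq_range]
    rcases hdimL with ⟨h0, h⟩ | ⟨-, h⟩
    · have h1 := hasCov_of_covDimLE hemb' h hV' (hrange ▸ hcov)
      have h2 : (((r + 1 : ℕ) : ℤ) - 2).toNat + 1 = r := by omega
      rwa [h2, hrange] at h1
    · rw [← hrange, range_eq_empty]
      exact hasCov_empty _ _

end HICantor

theorem stmt_0 (n : ℕ) (hn : 1 ≤ n) (W : Type) [TopologicalSpace W]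
    (hW : IsContinuum W) (hWnd : Nontrivial W)
    (hexists : ∃ What : TopSpace, IsContinuum What.carrier ∧ Nontrivial What.carrier ∧
      CovDimEq What.carrier 1 ∧
      ∀ S : Set What.carrier, IsSubcontinuum S → S.Nontrivial →
        ∃ f : ↥S → W, Continuous f ∧ Function.Surjective f) :
    ∃ X : TopSpace, IsContinuum X.carrier ∧ HereditarilyIndecomposable X.carrier ∧
      IsCantorManifold X.carrier n ∧
      ∀ S : Set X.carrier, IsSubcontinuum S → S.Nontrivial →
        ∃ f : ↥S → W, Continuous f ∧ Function.Surjective f := by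
  obtain ⟨What, ⟨hne, hcomp, hconn, hmet⟩, hnt, ⟨hdim, -⟩, hWhat⟩ := hexists
  let : MetricSpace What.carrier := metrizableSpaceMetric What.carrier
  obtain ⟨X, hX, hHI, hCM⟩ := HICantor.exists_cantorManifold hdim hn
  refine ⟨⟨X⟩, hX, hHI, hCM, fun S hS hSnt => ?_⟩
  -- A nondegenerate subcontinuum of the power has a nondegenerate projection to some factor.
  obtain ⟨p, hp, q, hq, hpq⟩ := hSnt
  obtain ⟨k, hk⟩ : ∃ k, p.1 k ≠ q.1 k := by
    by_contra hcon
    push Not at hcon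
    exact hpq (Subtype.ext (funext hcon))
  let π : X → What.carrier := fun x => x.1 k
  have hπ : Continuous π := (continuous_apply k).comp continuous_subtype_val
  obtain ⟨f, hf, hfs⟩ := hWhat (π '' S) ⟨hS.1.image hπ, hS.2.image _ hπ.continuousOn⟩
    ⟨π p, mem_image_of_mem π hp, π q, mem_image_of_mem π hq, hk⟩
  refine ⟨fun x => f ⟨π x.1, mem_image_of_mem π x.2⟩,
    hf.comp ((hπ.comp continuous_subtype_val).subtype_mk _), fun w => ?_⟩
  obtain ⟨⟨_, x, hx, rfl⟩, rfl⟩ := hfs w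
  exact ⟨⟨x, hx⟩, rfl⟩
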